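/- Let S be a scheme and let D, D′ be closed subschemes of ℙ¹_S such that the composites D → S and D′ → S are étale covers of degree 3. Let η : D → D′ be an S-isomorphism. Then there exists a unique S-automorphism α of ℙ¹_S such that α restricted to D equals η, i.e., α ∘ ι_D = ι_{D′} ∘ η, where ι_D : D → ℙ¹_S and ι_{D′} : D′ → ℙ¹_S are the inclusions. -/

import Mathlib

universe u

open AlgebraicGeometry CategoryTheory CategoryTheory.Limits

attribute [local instance] MvPolynomial.gradedAlgebra

/-- The projective line over `ℤ`, i.e. `Proj ℤ[X₀, X₁]`. -/
noncomputable def P1Z : Scheme.{u} :=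
  AlgebraicGeometry.Proj (MvPolynomial.homogeneousSubmodule (Fin 2) (ULift.{u} ℤ))

/-- The projective line `ℙ¹_S` over a scheme `S`, i.e. the base change to `S` of
`Proj ℤ[X₀, X₁]` (the fibre product over the terminal scheme, which is `Spec ℤ`). -/
noncomputable def P1 (S : Scheme.{u}) : Scheme.{u} :=
  pullback (terminal.from S) (terminal.from P1Z)

/-- The structure morphism `ℙ¹_S ⟶ S`. -/
noncomputable def P1proj (S : Scheme.{u}) : P1 S ⟶ S :=
  pullback.fst (terminal.from S) (terminal.from P1Z)

/-- `f : D ⟶ S` is an étale cover of degree `n`: a finite étale surjection all of whose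
geometric fibres consist of `n` points. -/
def IsEtaleCoverOfDegree (n : ℕ) {D S : Scheme.{u}} (f : D ⟶ S) : Prop :=
  IsFinite f ∧ IsEtale f ∧ Function.Surjective f.base ∧
    ∀ (K : Type u) [Field K] [IsAlgClosed K]
      (x : Spec (CommRingCat.of K) ⟶ S), Nat.card (pullback f x : Scheme.{u}) = n

/-!
An automorphism of `ℙ¹_T` over `T` is handled through Yoneda, as a compatible family of permutations
of the `V`-points of `ℙ¹` for all `V ⟶ T`. Étale-locally on the base, `D` is a disjoint union of
three copies of the base, so that it amounts to three sections of `ℙ¹`, any two of which are nowhere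
equal, and `η` carries them to three further such sections. By Cramer's rule the homographies act
transitively on these triples. The action is simply transitive: an automorphism fixing `0`, `∞` and
`1` preserves both standard charts, where it is given by polynomials `f(x)` and `g(y)` without
constant term, `y = x⁻¹`, and the relation `f(x) g(x⁻¹) = 1` then forces `f = x`. So the required
automorphism exists étale-locally and is unique, and hence the local ones glue, because the
representable presheaves `Hom(-, ℙ¹)` are sheaves for the étale topology.
-/

namespace P1

section GradedRing

open HomogeneousLocalization

variable {ι σ A B C : Type*} [AddCommMonoid ι] [DecidableEq ι] [CommRing A] [CommRing B]
  [CommRing C] [SetLike σ A] [AddSubgroupClass σ A] (𝒜 : ι → σ) [GradedRing 𝒜]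

/-- The ring homomorphism `A_(f) → B` induced by `ψ : A → B` when `ψ f` is a unit. -/
noncomputable def awayLift (ψ : A →+* B) {f : A} (hf : IsUnit (ψ f)) : Away 𝒜 f →+* B :=
  (IsLocalization.Away.lift (S := Localization.Away f) f hf).comp
    (algebraMap (Away 𝒜 f) (Localization.Away f))

variable {𝒜} {ψ : A →+* B} {f : A} {d : ι}

lemma awayLift_mk_mul (hf : f ∈ 𝒜 d) (h : IsUnit (ψ f)) (n : ℕ) (p : A) (hp : p ∈ 𝒜 (n • d)) :
    awayLift 𝒜 ψ h (Away.mk 𝒜 hf n p hp) * ψ f ^ n = ψ p := by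
  simp only [awayLift, RingHom.comp_apply, HomogeneousLocalization.algebraMap_apply, Away.val_mk]
  rw [← map_pow ψ, ← IsLocalization.Away.lift_eq (S := Localization.Away f) f h (f ^ n),
    ← map_mul, Localization.mk_eq_mk', IsLocalization.mk'_spec_mk, IsLocalization.Away.lift_eq]

lemma eq_awayLift (hf : f ∈ 𝒜 d) (h : IsUnit (ψ f)) {φ : Away 𝒜 f →+* B}
    (hφ : ∀ n p hp, φ (Away.mk 𝒜 hf n p hp) * ψ f ^ n = ψ p) : φ = awayLift 𝒜 ψ h := by
  ext a
  obtain ⟨n, p, hp, rfl⟩ := Away.mk_surjective _ hf a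
  exact (h.pow n).mul_left_injective ((hφ n p hp).trans (awayLift_mk_mul hf h n p hp).symm)

lemma comp_awayLift (hf : f ∈ 𝒜 d) (h : IsUnit (ψ f)) (g : B →+* C) :
    g.comp (awayLift 𝒜 ψ h) = awayLift 𝒜 (g.comp ψ) (h.map g) :=
  eq_awayLift hf _ fun n p hp => by
    simpa only [RingHom.comp_apply, map_mul, map_pow] using
      congrArg g (awayLift_mk_mul hf h n p hp)

lemma awayLift_comp_awayMap {e : ι} {g k : A} (hf : f ∈ 𝒜 d) (hg : g ∈ 𝒜 e) (hk : k = f * g)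
    (h : IsUnit (ψ f)) (h' : IsUnit (ψ k)) :
    (awayLift 𝒜 ψ h').comp (awayMap 𝒜 hg hk) = awayLift 𝒜 ψ h := by
  refine eq_awayLift hf h fun n p hp => ?_
  have hψk : ψ k = ψ f * ψ g := by rw [hk, map_mul]
  have hψg : IsUnit (ψ g) := isUnit_of_mul_isUnit_right (hψk ▸ h')
  refine (hψg.pow n).mul_left_injective ?_
  have := awayLift_mk_mul (hk ▸ SetLike.mul_mem_graded hf hg) h' n (p * g ^ n)
    (by rw [smul_add]; exact SetLike.mul_mem_graded hp (SetLike.pow_mem_graded n hg))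
  rw [hψk, map_mul, map_pow, mul_pow, ← mul_assoc] at this
  rwa [RingHom.comp_apply, awayMap_mk]

end GradedRing

section GlobalSections

variable {V W : Scheme.{u}}

lemma isUnit_of_forall_mem_basicOpen (s : Γ(V, ⊤)) (h : ∀ x : V, x ∈ V.basicOpen s) : IsUnit s :=
  RingedSpace.isUnit_of_isUnit_germ V.toRingedSpace _ _ fun x _ => (V.mem_basicOpen s x _).mp (h x)

lemma toSpecΓ_comp_injective {A : CommRingCat.{u}} :
    Function.Injective fun φ : A ⟶ Γ(V, ⊤) => V.toSpecΓ ≫ Spec.map φ := by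
  intro φ ψ h
  have h' := congrArg Scheme.Hom.appTop h
  simp only [Scheme.Hom.comp_appTop, Scheme.toSpecΓ_appTop, Scheme.ΓSpecIso_naturality] at h'
  exact (Iso.cancel_iso_hom_left _ _ _).mp h'

lemma exists_eq_toSpecΓ_comp {A : CommRingCat.{u}} (m : V ⟶ Spec A) :
    ∃ φ : A ⟶ Γ(V, ⊤), m = V.toSpecΓ ≫ Spec.map φ := by
  refine ⟨(Scheme.ΓSpecIso A).inv ≫ m.appTop, ?_⟩
  rw [Spec.map_comp, ← Scheme.toSpecΓ_naturality_assoc, toSpecΓ_SpecMap_ΓSpecIso_inv,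
    Category.comp_id]

/-- The ring homomorphism on global sections induced by `f : W ⟶ V`. -/
noncomputable abbrev res (f : W ⟶ V) : Γ(V, ⊤) →+* Γ(W, ⊤) := f.appTop.hom

end GlobalSections

section Proj

open HomogeneousLocalization

variable {V W : Scheme.{u}} {σ : Type*} {A : Type u} [CommRing A] [SetLike σ A]
  [AddSubgroupClass σ A] (𝒜 : ℕ → σ) [GradedRing 𝒜] {f g k : A} {d e : ℕ}

/-- The morphism `V ⟶ Proj 𝒜` attached to a ring homomorphism `ψ : A → Γ(V, ⊤)` sending the
homogeneous element `f` of positive degree to a unit. -/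
noncomputable def toProj (hd : 0 < d) (hf : f ∈ 𝒜 d) (ψ : A →+* Γ(V, ⊤)) (h : IsUnit (ψ f)) :
    V ⟶ Proj 𝒜 :=
  V.toSpecΓ ≫ Spec.map (CommRingCat.ofHom (awayLift 𝒜 ψ h)) ≫ Proj.awayι 𝒜 f hf hd

variable {𝒜} {ψ ψ' : A →+* Γ(V, ⊤)}

lemma comp_toProj (i : W ⟶ V) (hd : 0 < d) (hf : f ∈ 𝒜 d) (h : IsUnit (ψ f)) :
    i ≫ toProj 𝒜 hd hf ψ h = toProj 𝒜 hd hf ((res i).comp ψ) (h.map (res i)) := by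
  rw [toProj, toProj, Scheme.toSpecΓ_naturality_assoc, ← Spec.map_comp_assoc,
    ← comp_awayLift hf]
  rfl

lemma toProj_eq_toProj_iff (hd : 0 < d) (hf : f ∈ 𝒜 d) (h : IsUnit (ψ f)) (h' : IsUnit (ψ' f)) :
    toProj 𝒜 hd hf ψ h = toProj 𝒜 hd hf ψ' h' ↔ awayLift 𝒜 ψ h = awayLift 𝒜 ψ' h' := by
  refine ⟨fun H => ?_, fun H => by rw [toProj, toProj, H]⟩
  rw [toProj, toProj, ← Category.assoc, ← Category.assoc, cancel_mono] at H
  exact congrArg CommRingCat.Hom.hom (toSpecΓ_comp_injective H)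

lemma toProj_of_eq_mul (hd : 0 < d) (hf : f ∈ 𝒜 d) (hg : g ∈ 𝒜 e) (hk : k = f * g) {n : ℕ}
    (hn : 0 < n) (hde : n = d + e) (hk' : k ∈ 𝒜 n) (h : IsUnit (ψ f)) (h' : IsUnit (ψ k)) :
    toProj 𝒜 hn hk' ψ h' = toProj 𝒜 hd hf ψ h := by
  subst hde
  rw [toProj, toProj, ← awayLift_comp_awayMap hf hg hk h h', CommRingCat.ofHom_comp,
    Spec.map_comp, Category.assoc, Proj.SpecMap_awayMap_awayι]

lemma toProj_eq_toProj (hd : 0 < d) (hf : f ∈ 𝒜 d) (he : 0 < e) (hg : g ∈ 𝒜 e)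
    (h : IsUnit (ψ f)) (h' : IsUnit (ψ g)) : toProj 𝒜 hd hf ψ h = toProj 𝒜 he hg ψ h' := by
  have hfg : IsUnit (ψ (f * g)) := by rw [map_mul]; exact h.mul h'
  have hm := SetLike.mul_mem_graded hf hg
  rw [← toProj_of_eq_mul hd hf hg rfl (Nat.add_pos_left hd e) rfl hm h hfg,
    ← toProj_of_eq_mul he hg hf (mul_comm f g) (Nat.add_pos_left hd e) (add_comm d e) hm h' hfg]

lemma toProj_apply_mem_basicOpen (hd : 0 < d) (hf : f ∈ 𝒜 d) (h : IsUnit (ψ f)) (x : V) :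
    toProj 𝒜 hd hf ψ h x ∈ Proj.basicOpen 𝒜 f := by
  rw [← Proj.opensRange_awayι 𝒜 f hf hd]
  exact ⟨_, rfl⟩

lemma isUnit_iff_toProj_mem_basicOpen (hd : 0 < d) (hf : f ∈ 𝒜 d) (he : 0 < e) (hg : g ∈ 𝒜 e)
    (h : IsUnit (ψ f)) : IsUnit (ψ g) ↔ ∀ x, toProj 𝒜 hd hf ψ h x ∈ Proj.basicOpen 𝒜 g := by
  refine ⟨fun h' x => ?_, fun H => ?_⟩
  · rw [toProj_eq_toProj hd hf he hg h h']
    exact toProj_apply_mem_basicOpen he hg h' x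
  refine (isUnit_pow_iff hd.ne').mp (isUnit_of_forall_mem_basicOpen _ fun x => ?_)
  have hx : (V.toSpecΓ ≫ Spec.map (CommRingCat.ofHom (awayLift 𝒜 ψ h))) x ∈
      Proj.awayι 𝒜 f hf hd ⁻¹ᵁ Proj.basicOpen 𝒜 g := H x
  rw [Proj.awayι_preimage_basicOpen 𝒜 hf hd hg he] at hx
  have hx' : x ∈ V.toSpecΓ ⁻¹ᵁ PrimeSpectrum.basicOpen
      (awayLift 𝒜 ψ h (Away.isLocalizationElem hf hg)) := hx
  rw [Scheme.toSpecΓ_preimage_basicOpen] at hx'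
  rw [← map_pow, ← awayLift_mk_mul hf h e (g ^ d)
    (by simpa only [smul_eq_mul, mul_comm] using SetLike.pow_mem_graded d hg), Scheme.basicOpen_mul,
    Scheme.basicOpen_of_isUnit _ (h.pow e)]
  exact ⟨hx', trivial⟩

lemma exists_toSpecΓ_comp_awayι (hd : 0 < d) (hf : f ∈ 𝒜 d) {m : V ⟶ Proj 𝒜}
    (hm : ∀ x, m x ∈ Proj.basicOpen 𝒜 f) :
    ∃ φ : Away 𝒜 f →+* Γ(V, ⊤),
      m = V.toSpecΓ ≫ Spec.map (CommRingCat.ofHom φ) ≫ Proj.awayι 𝒜 f hf hd := by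
  have hr : Set.range m ⊆ Set.range (Proj.awayι 𝒜 f hf hd) := by
    rintro _ ⟨x, rfl⟩
    exact (Proj.opensRange_awayι 𝒜 f hf hd).ge (hm x)
  obtain ⟨φ, hφ⟩ := exists_eq_toSpecΓ_comp (IsOpenImmersion.lift _ m hr)
  refine ⟨φ.hom, ?_⟩
  rw [CommRingCat.ofHom_hom, ← Category.assoc, ← hφ, IsOpenImmersion.lift_fac]

end Proj

section Evaluation

open HomogeneousLocalization

variable {σ B C : Type*} [CommRing B] [CommRing C]

/-- The grading by degree of the polynomial ring `ℤ[X_i]_{i ∈ σ}`. -/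
noncomputable abbrev grading (σ : Type*) :
    ℕ → Submodule (ULift.{u} ℤ) (MvPolynomial σ (ULift.{u} ℤ)) :=
  MvPolynomial.homogeneousSubmodule σ (ULift.{u} ℤ)

lemma X_mem_grading (i : σ) : MvPolynomial.X i ∈ grading.{u} σ 1 :=
  MvPolynomial.isHomogeneous_X _ i

/-- Evaluation of integral polynomials at a tuple `v` of elements of a commutative ring. -/
noncomputable def intEval (v : σ → B) : MvPolynomial σ (ULift.{u} ℤ) →+* B :=
  MvPolynomial.eval₂Hom ((Int.castRingHom B).comp ULift.ringEquiv.toRingHom) v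

@[simp]
lemma intEval_X (v : σ → B) (i : σ) : intEval.{u} v (MvPolynomial.X i) = v i :=
  MvPolynomial.eval₂Hom_X' _ _ _

lemma eq_intEval (ψ : MvPolynomial σ (ULift.{u} ℤ) →+* B) :
    ψ = intEval fun i => ψ (MvPolynomial.X i) := by
  refine MvPolynomial.ringHom_ext (fun r => ?_) fun i =>
    (intEval_X (fun i => ψ (MvPolynomial.X i)) i).symm
  have hC : (ψ.comp MvPolynomial.C).comp ULift.ringEquiv.symm.toRingHom = Int.castRingHom B :=
    RingHom.ext_int _ _
  rw [intEval, MvPolynomial.coe_eval₂Hom, MvPolynomial.eval₂_C]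
  exact RingHom.congr_fun hC r.down

lemma comp_intEval (g : B →+* C) (v : σ → B) : g.comp (intEval.{u} v) = intEval (g ∘ v) := by
  rw [eq_intEval (g.comp _)]
  simp only [RingHom.comp_apply, intEval_X, Function.comp_def]

lemma intEval_smul (c : B) (v : σ → B) {n : ℕ} {p : MvPolynomial σ (ULift.{u} ℤ)}
    (hp : p.IsHomogeneous n) : intEval (c • v) p = c ^ n * intEval v p := by
  simp only [intEval, MvPolynomial.coe_eval₂Hom, MvPolynomial.eval₂_eq, Finset.mul_sum]
  refine Finset.sum_congr rfl fun d hd => ?_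
  have hdeg := hp (MvPolynomial.mem_support_iff.mp hd)
  rw [Pi.one_def, ← Finsupp.degree_eq_weight_one, Finsupp.degree_apply] at hdeg
  simp only [Pi.smul_apply, smul_eq_mul, mul_pow, Finset.prod_mul_distrib,
    Finset.prod_pow_eq_pow_sum, ← hdeg]
  ring

lemma awayLift_intEval_smul {v : σ → B} {c : B} {d : ℕ} {f : MvPolynomial σ (ULift.{u} ℤ)}
    (hf : f ∈ grading σ d) (h : IsUnit (intEval v f)) (h' : IsUnit (intEval (c • v) f)) :
    awayLift (grading σ) (intEval v) h = awayLift (grading σ) (intEval (c • v)) h' := by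
  refine eq_awayLift hf h' fun n p hp => ?_
  rw [intEval_smul c v hf, intEval_smul c v hp, ← awayLift_mk_mul hf h n p hp, smul_eq_mul]
  ring

variable (σ) in
/-- The rational function `X_k / X_i` on the chart `X_i ≠ 0`. -/
noncomputable def ratio (i k : σ) : Away (grading.{u} σ) (MvPolynomial.X i) :=
  Away.mk (grading σ) (X_mem_grading i) 1 (MvPolynomial.X k) (X_mem_grading k)

lemma val_ratio (i k : σ) : (ratio.{u} σ i k).val =
    Localization.mk (MvPolynomial.X k) ⟨MvPolynomial.X i, Submonoid.mem_powers _⟩ := by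
  simp only [ratio, Away.val_mk, pow_one]

lemma awayLift_ratio_mul {v : σ → B} {i : σ} (h : IsUnit (intEval.{u} v (MvPolynomial.X i)))
    (k : σ) : awayLift (grading σ) (intEval v) h (ratio σ i k) * v i = v k := by
  have := awayLift_mk_mul (X_mem_grading i) h 1 (MvPolynomial.X k) (X_mem_grading k)
  rwa [intEval_X, intEval_X, pow_one] at this

lemma mk_eq_intEval_ratio (i : σ) {n : ℕ} {p : MvPolynomial σ (ULift.{u} ℤ)}
    (hp : p ∈ grading σ (n • 1)) :
    Away.mk (grading σ) (X_mem_grading i) n p hp = intEval (ratio σ i) p := by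
  let R := MvPolynomial σ (ULift.{u} ℤ)
  let L := Localization.Away (MvPolynomial.X i : R)
  let g : Away (grading.{u} σ) (MvPolynomial.X i) →+* L := algebraMap _ _
  have hX : (fun k => algebraMap R L (MvPolynomial.X k)) =
      algebraMap R L (MvPolynomial.X i) • (g ∘ ratio σ i) := by
    ext k
    rw [Pi.smul_apply, smul_eq_mul, Function.comp_apply, HomogeneousLocalization.algebraMap_apply,
      val_ratio, Localization.mk_eq_mk', mul_comm]
    exact (IsLocalization.mk'_spec_mk _ _ _ _).symm
  have hval := RingHom.congr_fun (comp_intEval g (ratio σ i)) p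
  rw [RingHom.comp_apply, HomogeneousLocalization.algebraMap_apply] at hval
  apply HomogeneousLocalization.val_injective
  rw [hval, Away.val_mk, Localization.mk_eq_mk', IsLocalization.mk'_eq_iff_eq_mul,
    RingHom.congr_fun (eq_intEval (algebraMap R L)) p, hX,
    intEval_smul _ _ (by simpa only [smul_eq_mul, mul_one, MvPolynomial.mem_homogeneousSubmodule]
      using hp), mul_comm, map_pow]

lemma exists_eq_awayLift_intEval (i : σ) (φ : Away (grading.{u} σ) (MvPolynomial.X i) →+* B) :
    ∃ v : σ → B, v i = 1 ∧ ∃ h, φ = awayLift (grading σ) (intEval v) h := by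
  have hi : φ (ratio σ i i) = 1 := by
    have : ratio.{u} σ i i = 1 :=
      HomogeneousLocalization.val_injective _ <| by
        rw [val_ratio, HomogeneousLocalization.val_one]
        exact Localization.mk_self ⟨MvPolynomial.X i, Submonoid.mem_powers _⟩
    rw [this, map_one]
  have hX : intEval (φ ∘ ratio σ i) (MvPolynomial.X i) = 1 := (intEval_X _ i).trans hi
  refine ⟨φ ∘ ratio σ i, hi, hX ▸ isUnit_one,
    eq_awayLift (X_mem_grading i) _ fun n p hp => ?_⟩
  rw [hX, one_pow, mul_one, mk_eq_intEval_ratio i hp, ← comp_intEval, RingHom.comp_apply]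

end Evaluation

section Coordinates

open MvPolynomial

variable {V W : Scheme.{u}} {m m' : V ⟶ P1Z.{u}} {v w : Fin 2 → Γ(V, ⊤)}

/-- The `V`-point `m` of `ℙ¹` is given by the homogeneous coordinates `v`, one of which is a unit
of `Γ(V, ⊤)`. Not every point has global coordinates, but every point has them locally. -/
def HasCoords (m : V ⟶ P1Z.{u}) (v : Fin 2 → Γ(V, ⊤)) : Prop :=
  ∃ (i : Fin 2) (h : IsUnit (intEval v (X i))),
    m = toProj (grading (Fin 2)) one_pos (X_mem_grading i) (intEval v) h

/-- The standard affine open `D₊(Xᵢ)` of `ℙ¹`. -/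
noncomputable def stdOpen (i : Fin 2) : P1Z.{u}.Opens :=
  (Proj.basicOpen (grading (Fin 2)) (X i) : (Proj _).Opens)

lemma exists_hasCoords {i : Fin 2} (hi : IsUnit (v i)) : ∃ m : V ⟶ P1Z.{u}, HasCoords m v :=
  ⟨_, i, (intEval_X v i).symm ▸ hi, rfl⟩

lemma exists_hasCoords_of_mem_stdOpen {i : Fin 2} (hm : ∀ x, m x ∈ stdOpen i) :
    ∃ v, v i = 1 ∧ HasCoords m v := by
  obtain ⟨φ, hφ⟩ := exists_toSpecΓ_comp_awayι one_pos (X_mem_grading i) hm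
  obtain ⟨v, hv, h, rfl⟩ := exists_eq_awayLift_intEval i φ
  exact ⟨v, hv, i, h, hφ⟩

lemma exists_mem_stdOpen (x : P1Z.{u}) : ∃ i, x ∈ stdOpen i := by
  have hcov := Proj.iSup_basicOpen_eq_top' (grading (Fin 2)) X
    (fun i => ⟨1, X_mem_grading i⟩) <| by
      rw [eq_top_iff]
      rintro p -
      induction p using MvPolynomial.induction_on with
      | C a =>
        exact Subalgebra.algebraMap_mem _ (⟨C a, isHomogeneous_C _ _⟩ : grading.{u} (Fin 2) 0)
      | add p q hp hq => exact add_mem hp hq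
      | mul_X p i hp => exact mul_mem hp (Algebra.subset_adjoin ⟨i, rfl⟩)
  exact TopologicalSpace.Opens.mem_iSup.mp (hcov.ge (Set.mem_univ x))

lemma exists_opens_hasCoords (m : V ⟶ P1Z.{u}) (x : V) :
    ∃ U : V.Opens, x ∈ U ∧ ∃ v, HasCoords (U.ι ≫ m) v := by
  obtain ⟨i, hi⟩ := exists_mem_stdOpen (m x)
  obtain ⟨v, -, hv⟩ := exists_hasCoords_of_mem_stdOpen (i := i) (m := (m ⁻¹ᵁ stdOpen i).ι ≫ m)
    fun y => y.2
  exact ⟨m ⁻¹ᵁ stdOpen i, hi, v, hv⟩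

namespace HasCoords

lemma comp (h : HasCoords m v) (f : W ⟶ V) : HasCoords (f ≫ m) (res f ∘ v) := by
  obtain ⟨i, hi, rfl⟩ := h
  have := comp_toProj (𝒜 := grading (Fin 2)) f one_pos (X_mem_grading i) hi
  simp only [comp_intEval] at this
  exact ⟨i, _, this⟩

lemma isUnit_iff (h : HasCoords m v) (j : Fin 2) : IsUnit (v j) ↔ ∀ x, m x ∈ stdOpen j := by
  obtain ⟨i, hi, rfl⟩ := h
  rw [← intEval_X v j]
  exact isUnit_iff_toProj_mem_basicOpen one_pos (X_mem_grading i) one_pos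
    (X_mem_grading j) hi

lemma exists_isUnit (h : HasCoords m v) : ∃ i, IsUnit (v i) := by
  obtain ⟨i, hi, -⟩ := h
  exact ⟨i, intEval_X v i ▸ hi⟩

lemma eq_toProj (h : HasCoords m v) {j : Fin 2} (hj : IsUnit (intEval v (X j))) :
    m = toProj (grading (Fin 2)) one_pos (X_mem_grading j)
      (intEval v) hj := by
  obtain ⟨i, hi, rfl⟩ := h
  exact toProj_eq_toProj one_pos (X_mem_grading i) one_pos (X_mem_grading j) hi hj

lemma eq (h : HasCoords m v) (h' : HasCoords m' v) : m = m' := by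
  obtain ⟨i, hi, rfl⟩ := h
  exact (h'.eq_toProj hi).symm

lemma smul (h : HasCoords m v) (c : Γ(V, ⊤)ˣ) : HasCoords m (c • v) := by
  obtain ⟨i, hi, rfl⟩ := h
  have hi' : IsUnit (intEval (c • v) (X i)) := by
    rw [intEval_X] at hi ⊢
    exact c.isUnit.mul hi
  exact ⟨i, hi', (toProj_eq_toProj_iff one_pos (X_mem_grading i) hi hi').mpr
    (awayLift_intEval_smul (c := (c : Γ(V, ⊤))) (X_mem_grading i) hi hi')⟩

lemma exists_eq_smul (h : HasCoords m v) (h' : HasCoords m w) : ∃ c : Γ(V, ⊤)ˣ, w = c • v := by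
  obtain ⟨i, hvi⟩ := h.exists_isUnit
  have hwi : IsUnit (w i) := (h'.isUnit_iff i).mpr ((h.isUnit_iff i).mp hvi)
  have hvi' := (intEval_X v i).symm ▸ hvi
  have hwi' := (intEval_X w i).symm ▸ hwi
  have key := (toProj_eq_toProj_iff one_pos (X_mem_grading i) hvi' hwi').mp
    ((h.eq_toProj hvi').symm.trans (h'.eq_toProj hwi'))
  refine ⟨hwi.unit * hvi.unit⁻¹, funext fun k => ?_⟩
  rw [← awayLift_ratio_mul hwi' k, ← key, Pi.smul_apply, ← awayLift_ratio_mul hvi' k,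
    Units.smul_def, Units.val_mul, IsUnit.unit_spec, smul_eq_mul, mul_left_comm _ _ (v i),
    mul_assoc, IsUnit.val_inv_mul, mul_one]

end HasCoords

end Coordinates

section EtaleLocal

/-- The property `P` of morphisms to `X` holds étale-locally on `X`. -/
def EtaleLocally {X : Scheme.{u}} (P : ∀ ⦃U : Scheme.{u}⦄, (U ⟶ X) → Prop) : Prop :=
  ∀ x : X, ∃ (U : Scheme.{u}) (f : U ⟶ X), Etale f ∧ x ∈ Set.range f ∧ P f

variable {X Y Z : Scheme.{u}}

namespace EtaleLocally

variable {P Q : ∀ ⦃U : Scheme.{u}⦄, (U ⟶ X) → Prop}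

lemma of_id (h : P (𝟙 X)) : EtaleLocally P :=
  fun x => ⟨X, 𝟙 X, inferInstance, ⟨x, rfl⟩, h⟩

lemma of_opens (h : ∀ x : X, ∃ U : X.Opens, x ∈ U ∧ P U.ι) : EtaleLocally P := fun x =>
  let ⟨U, hx, hU⟩ := h x
  ⟨U, U.ι, inferInstance, ⟨⟨x, hx⟩, rfl⟩, hU⟩

lemma mono (h : EtaleLocally P) (hPQ : ∀ ⦃U : Scheme.{u}⦄ (f : U ⟶ X), P f → Q f) :
    EtaleLocally Q := fun x =>
  let ⟨U, f, hf, hx, h⟩ := h x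
  ⟨U, f, hf, hx, hPQ f h⟩

lemma bind (h : EtaleLocally P)
    (hPQ : ∀ ⦃U : Scheme.{u}⦄ (f : U ⟶ X), P f → EtaleLocally fun _ g => Q (g ≫ f)) :
    EtaleLocally Q := by
  intro x
  obtain ⟨U, f, _, ⟨y, rfl⟩, hP⟩ := h x
  obtain ⟨U', g, _, ⟨z, rfl⟩, hQ⟩ := hPQ f hP y
  exact ⟨U', g ≫ f, inferInstance, ⟨z, Scheme.Hom.comp_apply ..⟩, hQ⟩

lemma pullback (h : EtaleLocally P) (g : Y ⟶ X) :
    EtaleLocally fun (W : Scheme.{u}) (a : W ⟶ Y) => ∃ U, ∃ (b : W ⟶ U) (f : U ⟶ X),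
      a ≫ g = b ≫ f ∧ P f := by
  intro y
  obtain ⟨U, f, _, ⟨z, hz⟩, hP⟩ := h (g y)
  obtain ⟨w, hw, -⟩ := Scheme.Pullback.exists_preimage_pullback y z hz.symm
  exact ⟨_, Limits.pullback.fst g f, inferInstance, ⟨w, hw⟩, U, Limits.pullback.snd g f, f,
    pullback.condition, hP⟩

lemma mem_etaleTopology (R : Sieve X) (h : EtaleLocally fun _ f => R f) :
    R ∈ Scheme.etaleTopology X := by
  choose U f hf hx hR using h
  refine GrothendieckTopology.superset_covering _ ?_ (Precoverage.generate_mem_toGrothendieck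
    ((Scheme.ofArrows_mem_precoverage_iff @Etale).mpr ⟨fun x => ⟨x, hx x⟩, hf⟩))
  rw [Sieve.generate_le_iff]
  rintro _ _ ⟨x⟩
  exact hR x

instance : Scheme.etaleTopology.{u}.Subcanonical := .of_le Scheme.etaleTopology_le_proetaleTopology

lemma hom_ext {m m' : X ⟶ Z} (h : EtaleLocally fun _ f => f ≫ m = f ≫ m') : m = m' := by
  let R : Sieve X :=
    { arrows := fun _ f => f ≫ m = f ≫ m'
      downward_closed := fun hf g => by rw [Category.assoc, hf, Category.assoc] }
  have hR := GrothendieckTopology.Subcanonical.isSheaf_of_isRepresentable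
    (J := Scheme.etaleTopology) (yoneda.obj Z) R (mem_etaleTopology R h)
  exact hR.isSeparatedFor.ext fun Y f hf => hf

lemma exists_hom {P : ∀ ⦃U : Scheme.{u}⦄, (U ⟶ X) → (U ⟶ Z) → Prop}
    (h : EtaleLocally fun U f => ∃ m : U ⟶ Z, P f m)
    (comp : ∀ ⦃U U' : Scheme.{u}⦄ (g : U' ⟶ U) (f : U ⟶ X) (m : U ⟶ Z), P f m → P (g ≫ f) (g ≫ m))
    (uniq : ∀ ⦃U : Scheme.{u}⦄ (f : U ⟶ X) (m m' : U ⟶ Z), P f m → P f m' → m = m') :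
    ∃ m : X ⟶ Z, ∀ ⦃U : Scheme.{u}⦄ (f : U ⟶ X) (n : U ⟶ Z), P f n → f ≫ m = n := by
  let R : Sieve X :=
    { arrows := fun U f => ∃ m : U ⟶ Z, P f m
      downward_closed := fun ⟨m, hm⟩ g => ⟨g ≫ m, comp g _ m hm⟩ }
  have hR := GrothendieckTopology.Subcanonical.isSheaf_of_isRepresentable
    (J := Scheme.etaleTopology) (yoneda.obj Z) R (mem_etaleTopology R h)
  let s : Presieve.FamilyOfElements (yoneda.obj Z) R.arrows := fun _ _ hf => hf.choose
  have hs : ∀ {U : Scheme.{u}} (f : U ⟶ X) (hf : R f), P f (s f hf) := fun f hf => hf.choose_spec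
  have hcompat : s.Compatible := by
    rw [Presieve.compatible_iff_sieveCompatible]
    exact fun _ _ f g hf => uniq (g ≫ f) _ _ (hs _ _) (comp g f _ (hs f hf))
  obtain ⟨m, hm, -⟩ := hR s hcompat
  exact ⟨m, fun U f n hn => (hm f ⟨n, hn⟩).trans (uniq f _ _ (hs f ⟨n, hn⟩) hn)⟩

end EtaleLocally

end EtaleLocal

section PointAut

variable {Z T V W : Scheme.{u}}

/-- An automorphism of `Z × T` over `T`, given through Yoneda by its action on points: it permutes
the `V`-points of `Z`, for every `V` over `T`, compatibly with base change along `W ⟶ V`. -/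
structure PointAut (Z T : Scheme.{u}) where
  /-- The action on the `V`-points of `Z`. -/
  perm {V : Scheme.{u}} (t : V ⟶ T) : Equiv.Perm (V ⟶ Z)
  comp_perm {V W : Scheme.{u}} (f : W ⟶ V) (t : V ⟶ T) (m : V ⟶ Z) :
    f ≫ perm t m = perm (f ≫ t) (f ≫ m)

namespace PointAut

/-- The inverse automorphism. -/
def symm (α : PointAut Z T) : PointAut Z T where
  perm t := (α.perm t).symm
  comp_perm f t m := by
    rw [Equiv.eq_symm_apply, ← α.comp_perm, Equiv.apply_symm_apply]

/-- The automorphism `α` followed by `β`. -/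
def trans (α β : PointAut Z T) : PointAut Z T where
  perm t := (α.perm t).trans (β.perm t)
  comp_perm f t m := by
    simp only [Equiv.trans_apply, β.comp_perm, α.comp_perm]

/-- The pullback of an automorphism along `h : W ⟶ T`. -/
def baseChange (α : PointAut Z T) (h : W ⟶ T) : PointAut Z W where
  perm t := α.perm (t ≫ h)
  comp_perm f t m := by rw [α.comp_perm, Category.assoc]

lemma exists_natural {R : ∀ ⦃V : Scheme.{u}⦄, (V ⟶ T) → (V ⟶ Z) → (V ⟶ Z) → Prop}
    (comp : ∀ ⦃V W⦄ (f : W ⟶ V) t m n, R t m n → R (f ≫ t) (f ≫ m) (f ≫ n))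
    (total : ∀ ⦃V⦄ (t : V ⟶ T) m, EtaleLocally fun _ f => ∃ n, R (f ≫ t) (f ≫ m) n)
    (unique : ∀ ⦃V⦄ (t : V ⟶ T) m n n', R t m n → R t m n' → n = n') :
    ∃ F : ∀ ⦃V : Scheme.{u}⦄, (V ⟶ T) → (V ⟶ Z) → (V ⟶ Z),
      (∀ ⦃V W⦄ (f : W ⟶ V) t m, f ≫ F t m = F (f ≫ t) (f ≫ m)) ∧
      ∀ ⦃V⦄ (t : V ⟶ T) m n, R t m n → F t m = n := by
  have glue (V : Scheme.{u}) (t : V ⟶ T) (m : V ⟶ Z) : ∃ n : V ⟶ Z, ∀ ⦃U : Scheme.{u}⦄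
      (f : U ⟶ V) (k : U ⟶ Z), R (f ≫ t) (f ≫ m) k → f ≫ n = k :=
    (total t m).exists_hom
      (fun _ _ g f k h => by simpa only [Category.assoc] using comp g _ _ _ h)
      (fun _ _ _ _ => unique _ _ _ _)
  choose F hF using glue
  refine ⟨F, fun V W f t m => ?_, fun V t m n h => ?_⟩
  · refine ((total (f ≫ t) (f ≫ m)).mono fun U g ⟨n, hn⟩ => ?_).hom_ext
    rw [hF _ _ _ g n hn, ← Category.assoc, hF _ _ _ (g ≫ f) n (by simpa only [Category.assoc])]
  · rw [← hF V t m (𝟙 V) n (by simpa only [Category.id_comp]), Category.id_comp]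

lemma exists_of_rel {R : ∀ ⦃V : Scheme.{u}⦄, (V ⟶ T) → (V ⟶ Z) → (V ⟶ Z) → Prop}
    (comp : ∀ ⦃V W⦄ (f : W ⟶ V) t m n, R t m n → R (f ≫ t) (f ≫ m) (f ≫ n))
    (rightTotal : ∀ ⦃V⦄ (t : V ⟶ T) m, EtaleLocally fun _ f => ∃ n, R (f ≫ t) (f ≫ m) n)
    (leftTotal : ∀ ⦃V⦄ (t : V ⟶ T) n, EtaleLocally fun _ f => ∃ m, R (f ≫ t) m (f ≫ n))
    (rightUnique : ∀ ⦃V⦄ (t : V ⟶ T) m n n', R t m n → R t m n' → n = n')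
    (leftUnique : ∀ ⦃V⦄ (t : V ⟶ T) m m' n, R t m n → R t m' n → m = m') :
    ∃ α : PointAut Z T, ∀ ⦃V⦄ (t : V ⟶ T) m n, R t m n → α.perm t m = n := by
  obtain ⟨F, hF, hFR⟩ := exists_natural comp rightTotal rightUnique
  obtain ⟨G, hG, hGR⟩ := exists_natural (R := fun _ t n m => R t m n)
    (fun _ _ f t n m => comp f t m n) leftTotal (fun _ t n m m' => leftUnique t m m' n)
  refine ⟨⟨fun t => ⟨F t, G t, fun m => ?_, fun n => ?_⟩, fun f t m => hF f t m⟩, hFR⟩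
  · refine ((rightTotal t m).mono fun U f ⟨n, hn⟩ => ?_).hom_ext
    rw [hG, hF, hFR _ _ _ hn, hGR _ _ _ hn]
  · refine ((leftTotal t n).mono fun U f ⟨m, hm⟩ => ?_).hom_ext
    rw [hF, hG, hGR _ _ _ hm, hFR _ _ _ hm]

end PointAut

end PointAut

section MatrixAction

open Matrix

variable {V W T : Scheme.{u}} {m n : V ⟶ P1Z.{u}} {v w : Fin 2 → Γ(V, ⊤)}

lemma HasCoords.exists_dotProduct_eq_one (h : HasCoords m v) : ∃ w, w ⬝ᵥ v = 1 := by
  obtain ⟨i, hi⟩ := h.exists_isUnit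
  exact ⟨Pi.single i ↑hi.unit⁻¹, by rw [single_dotProduct, IsUnit.val_inv_mul]⟩

lemma etaleLocally_exists_hasCoords (h : w ⬝ᵥ v = 1) :
    EtaleLocally fun _ (f : _ ⟶ V) => ∃ m, HasCoords m (res f ∘ v) := by
  refine .of_opens fun x => ?_
  obtain ⟨i, hi⟩ : ∃ i, x ∈ V.basicOpen (v i) := by
    by_contra! hx
    have hmax := fun i => (IsLocalRing.mem_maximalIdeal _).mpr
      (mt (V.mem_basicOpen (v i) x trivial).mpr (hx i))
    refine (IsLocalRing.maximalIdeal (V.presheaf.stalk x)).ne_top_iff_one.mp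
      (IsLocalRing.maximalIdeal.isMaximal _).ne_top ?_
    rw [← map_one (V.presheaf.germ ⊤ x trivial).hom, ← h, dotProduct, map_sum]
    exact sum_mem fun i _ => by rw [map_mul]; exact Ideal.mul_mem_left _ _ (hmax i)
  have hres : IsUnit (res (V.basicOpen (v i)).ι (v i)) :=
    isUnit_of_forall_mem_basicOpen _ fun y =>
      (Scheme.preimage_basicOpen (V.basicOpen (v i)).ι (v i)).le y.2
  exact ⟨V.basicOpen (v i), hi, exists_hasCoords (i := i) hres⟩

lemma etaleLocally_hasCoords (m : V ⟶ P1Z.{u}) :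
    EtaleLocally fun _ f => ∃ v, HasCoords (f ≫ m) v :=
  .of_opens (exists_opens_hasCoords m)

/-- The point `n` is the image of the point `m` under the homography with matrix `M`. -/
def IsHomographic (M : GL (Fin 2) Γ(V, ⊤)) (m n : V ⟶ P1Z.{u}) : Prop :=
  ∃ v, HasCoords m v ∧ HasCoords n (M.val *ᵥ v)

namespace IsHomographic

variable {M : GL (Fin 2) Γ(V, ⊤)}

lemma res_comp_mulVec (f : W ⟶ V) (v : Fin 2 → Γ(V, ⊤)) :
    res f ∘ (M.val *ᵥ v) = (GeneralLinearGroup.map (res f) M).val *ᵥ (res f ∘ v) :=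
  funext (RingHom.map_mulVec (res f) M.val v)

lemma map_res_comp (M : GL (Fin 2) Γ(T, ⊤)) (f : W ⟶ V) (t : V ⟶ T) :
    GeneralLinearGroup.map (res (f ≫ t)) M =
      GeneralLinearGroup.map (res f) (GeneralLinearGroup.map (res t) M) :=
  Units.ext (Matrix.ext fun _ _ => rfl)

lemma comp (h : IsHomographic M m n) (f : W ⟶ V) :
    IsHomographic (GeneralLinearGroup.map (res f) M) (f ≫ m) (f ≫ n) := by
  obtain ⟨v, hm, hn⟩ := h
  exact ⟨_, hm.comp f, res_comp_mulVec f v ▸ hn.comp f⟩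

lemma inv (h : IsHomographic M m n) : IsHomographic M⁻¹ n m := by
  obtain ⟨v, hm, hn⟩ := h
  refine ⟨_, hn, ?_⟩
  rwa [mulVec_mulVec, Units.inv_mul, one_mulVec]

lemma right_unique {n' : V ⟶ P1Z.{u}} (h : IsHomographic M m n) (h' : IsHomographic M m n') :
    n = n' := by
  obtain ⟨v, hm, hn⟩ := h
  obtain ⟨w, hm', hn'⟩ := h'
  obtain ⟨c, rfl⟩ := hm.exists_eq_smul hm'
  refine (hn.smul c).eq ?_
  rwa [mulVec_smul] at hn'

lemma etaleLocally (M : GL (Fin 2) Γ(V, ⊤)) (m : V ⟶ P1Z.{u}) : EtaleLocally fun _ (f : _ ⟶ V) =>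
    ∃ n, IsHomographic (GeneralLinearGroup.map (res f) M) (f ≫ m) n := by
  refine (etaleLocally_hasCoords m).bind fun U f ⟨v, hv⟩ => ?_
  obtain ⟨w, hw⟩ := hv.exists_dotProduct_eq_one
  set N := GeneralLinearGroup.map (res f) M
  have hw' : w ᵥ* N⁻¹.val ⬝ᵥ N.val *ᵥ v = 1 := by
    rw [dotProduct_mulVec, vecMul_vecMul, Units.inv_mul, vecMul_one, hw]
  refine (etaleLocally_exists_hasCoords hw').mono fun U' g ⟨n, hn⟩ => ⟨n, res g ∘ v, ?_, ?_⟩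
  · rw [Category.assoc]
    exact hv.comp g
  · rwa [res_comp_mulVec] at hn

end IsHomographic

lemma PointAut.exists_isHomographic (M : GL (Fin 2) Γ(T, ⊤)) :
    ∃ α : PointAut P1Z.{u} T, ∀ ⦃V : Scheme.{u}⦄ (t : V ⟶ T) (m n : V ⟶ P1Z.{u}),
      IsHomographic (GeneralLinearGroup.map (res t) M) m n → α.perm t m = n := by
  refine exists_of_rel (fun V W f t m n h => IsHomographic.map_res_comp M f t ▸ h.comp f)
    (fun V t m => ?_) (fun V t n => ?_)
    (fun V t m n n' h h' => h.right_unique h') fun V t m m' n h h' => h.inv.right_unique h'.inv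
  · simpa only [IsHomographic.map_res_comp] using IsHomographic.etaleLocally _ m
  · refine (IsHomographic.etaleLocally (GeneralLinearGroup.map (res t) M)⁻¹ n).mono
      fun U f ⟨m, hm⟩ => ⟨m, ?_⟩
    have := hm.inv
    rwa [map_inv, inv_inv, ← IsHomographic.map_res_comp] at this

end MatrixAction

section Incidence

/-- The morphisms `σ` and `τ` agree at no point. -/
def NowhereEq {T Z : Scheme.{u}} (σ τ : T ⟶ Z) : Prop :=
  ∀ (K : Type u) [Field K] (y : Spec (CommRingCat.of K) ⟶ T), y ≫ σ ≠ y ≫ τ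

variable {T V : Scheme.{u}} {σ τ : T ⟶ P1Z.{u}} {v w : Fin 2 → Γ(T, ⊤)}

lemma NowhereEq.comp {Z : Scheme.{u}} {σ τ : T ⟶ Z} (h : NowhereEq σ τ) (f : V ⟶ T) :
    NowhereEq (f ≫ σ) (f ≫ τ) := fun K _ y => by
  simpa only [Category.assoc] using h K (y ≫ f)

lemma isField_ΓSpec (K : Type u) [Field K] : IsField Γ(Spec (CommRingCat.of K), ⊤) :=
  (Scheme.ΓSpecIso (CommRingCat.of K)).commRingCatIsoToRingEquiv.toMulEquiv.isField
    (Field.toIsField K)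

lemma isUnit_of_forall_field_point {s : Γ(T, ⊤)}
    (h : ∀ (K : Type u) [Field K] (y : Spec (CommRingCat.of K) ⟶ T), res y s ≠ 0) :
    IsUnit s := by
  refine isUnit_of_forall_mem_basicOpen s fun x => ?_
  let y := T.fromSpecResidueField x
  obtain ⟨z, hz⟩ : x ∈ Set.range y := by
    rw [Scheme.range_fromSpecResidueField]
    exact rfl
  obtain ⟨r, hr⟩ := (isField_ΓSpec _).mul_inv_cancel (h _ y)
  have hu : IsUnit (res y s) := .of_mul_eq_one r hr
  have hmem : z ∈ y ⁻¹ᵁ T.basicOpen s := by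
    rw [Scheme.preimage_basicOpen_top]
    exact (Scheme.basicOpen_of_isUnit _ hu).ge trivial
  exact hz ▸ hmem

/-- The determinant with rows `v` and `w`. -/
def rowDet {B : Type*} [CommRing B] (v w : Fin 2 → B) : B := v 0 * w 1 - v 1 * w 0

lemma HasCoords.eq_of_rowDet_eq_zero (hv : HasCoords σ v) (hw : HasCoords τ w)
    (h : rowDet v w = 0) : σ = τ := by
  obtain ⟨i, hi⟩ := hv.exists_isUnit
  have hmul (k : Fin 2) : w k * v i = w i * v k := by
    rw [rowDet] at h
    fin_cases i <;> fin_cases k <;> simp only [Fin.mk_zero, Fin.mk_one] <;> grind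
  have hk (k : Fin 2) : w k = w i * ↑hi.unit⁻¹ * v k := by
    rw [mul_right_comm, ← hmul, mul_assoc, IsUnit.mul_val_inv, mul_one]
  obtain ⟨j, hj⟩ := hw.exists_isUnit
  rw [hk] at hj
  refine (hv.smul (isUnit_of_mul_isUnit_left hj).unit).eq ?_
  convert hw using 1
  exact funext fun k => (hk k).symm

lemma HasCoords.eq_iff_rowDet_eq_zero (hv : HasCoords σ v) (hw : HasCoords τ w) :
    σ = τ ↔ rowDet v w = 0 := by
  refine ⟨?_, hv.eq_of_rowDet_eq_zero hw⟩
  rintro rfl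
  obtain ⟨c, rfl⟩ := hv.exists_eq_smul hw
  simp only [rowDet, Pi.smul_apply, Units.smul_def, smul_eq_mul]
  ring

lemma HasCoords.isUnit_rowDet (hv : HasCoords σ v) (hw : HasCoords τ w) (h : NowhereEq σ τ) :
    IsUnit (rowDet v w) :=
  isUnit_of_forall_field_point fun K _ y h0 =>
    h K y ((hv.comp y).eq_of_rowDet_eq_zero (hw.comp y) (by
      simpa only [rowDet, map_sub, map_mul, Function.comp_apply] using h0))

end Incidence

section Charts

variable {V W : Scheme.{u}} {m : V ⟶ P1Z.{u}} {v : Fin 2 → Γ(V, ⊤)} {i j : Fin 2}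

/-- Homogeneous coordinates of the point with affine coordinate `s` in the chart `D₊(Xᵢ)`. -/
def chartCoords {B : Type*} [CommRing B] (i : Fin 2) (s : B) : Fin 2 → B :=
  Function.update (fun _ => s) i 1

lemma chartCoords_zero {B : Type*} [CommRing B] (s : B) : chartCoords 0 s = ![1, s] := by
  ext k
  fin_cases k <;> rfl

lemma chartCoords_one {B : Type*} [CommRing B] (s : B) : chartCoords 1 s = ![s, 1] := by
  ext k
  fin_cases k <;> rfl

lemma exists_hasCoords_chartCoords (i : Fin 2) (s : Γ(V, ⊤)) :
    ∃ m : V ⟶ P1Z.{u}, HasCoords m (chartCoords i s) :=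
  exists_hasCoords (i := i) (by rw [chartCoords, Function.update_self]; exact isUnit_one)

/-- The point of the projective line with affine coordinate `s` in the chart `D₊(Xᵢ)`. -/
noncomputable def chart (i : Fin 2) (s : Γ(V, ⊤)) : V ⟶ P1Z.{u} :=
  (exists_hasCoords_chartCoords i s).choose

lemma hasCoords_chart (i : Fin 2) (s : Γ(V, ⊤)) : HasCoords (chart i s) (chartCoords i s) :=
  (exists_hasCoords_chartCoords i s).choose_spec

lemma comp_chart (f : W ⟶ V) (i : Fin 2) (s : Γ(V, ⊤)) : f ≫ chart i s = chart i (res f s) := by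
  refine HasCoords.eq (v := chartCoords i (res f s)) ?_ (hasCoords_chart i _)
  convert (hasCoords_chart i s).comp f using 1
  simp only [chartCoords, Function.comp_update, map_one]
  rfl

lemma chart_injective (i : Fin 2) : Function.Injective (chart (V := V) i) := by
  intro s s' h
  rw [(hasCoords_chart i s).eq_iff_rowDet_eq_zero (hasCoords_chart i s')] at h
  fin_cases i <;> simp only [Fin.mk_zero, Fin.mk_one, chartCoords_zero, chartCoords_one, rowDet,
    Matrix.cons_val_zero, Matrix.cons_val_one] at h <;> grind

lemma chart_eq_chart_iff (hij : i ≠ j) {s s' : Γ(V, ⊤)} :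
    chart i s = chart j s' ↔ s * s' = 1 := by
  rw [(hasCoords_chart i s).eq_iff_rowDet_eq_zero (hasCoords_chart j s')]
  obtain ⟨rfl, rfl⟩ | ⟨rfl, rfl⟩ : i = 0 ∧ j = 1 ∨ i = 1 ∧ j = 0 := by omega
  · simp only [chartCoords_zero, chartCoords_one, rowDet, Matrix.cons_val_zero, Matrix.cons_val_one]
    grind
  · simp only [chartCoords_zero, chartCoords_one, rowDet, Matrix.cons_val_zero, Matrix.cons_val_one]
    grind

lemma nowhereEq_chart_zero (hij : i ≠ j) (s : Γ(V, ⊤)) : NowhereEq (chart i s) (chart j 0) := by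
  intro K _ y h
  rw [comp_chart, comp_chart, chart_eq_chart_iff hij, map_zero, mul_zero] at h
  obtain ⟨a, b, hab⟩ := (isField_ΓSpec K).exists_pair_ne
  exact hab (eq_of_zero_eq_one h a b)

lemma exists_eq_chart (h : HasCoords m v) (hi : IsUnit (v i)) : ∃ s, m = chart i s := by
  obtain ⟨a, ha⟩ := hi.exists_left_inv
  refine ⟨a * v (1 - i), h.eq_of_rowDet_eq_zero (hasCoords_chart i _) ?_⟩
  fin_cases i
  · simp only [Fin.mk_zero, sub_zero, chartCoords_zero, rowDet, Matrix.cons_val_zero,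
      Matrix.cons_val_one] at ha ⊢
    grind
  · simp only [Fin.mk_one, sub_self, chartCoords_one, rowDet, Matrix.cons_val_zero,
      Matrix.cons_val_one] at ha ⊢
    grind

lemma exists_eq_chart_of_nowhereEq (hij : i ≠ j) (h : NowhereEq m (chart j 0)) :
    ∃ s, m = chart i s := by
  have hmem (x : V) : m x ∈ stdOpen i := by
    obtain ⟨U, hx, v, hv⟩ := exists_opens_hasCoords m x
    have hU := h.comp U.ι
    rw [comp_chart, map_zero] at hU
    have hdet := hv.isUnit_rowDet (hasCoords_chart j 0) hU
    refine (hv.isUnit_iff i).mp ?_ ⟨x, hx⟩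
    obtain ⟨rfl, rfl⟩ | ⟨rfl, rfl⟩ : i = 0 ∧ j = 1 ∨ i = 1 ∧ j = 0 := by omega
    · simpa [rowDet, chartCoords_one] using hdet
    · simpa [rowDet, chartCoords_zero] using hdet
  obtain ⟨v, hvi, hv⟩ := exists_hasCoords_of_mem_stdOpen hmem
  exact exists_eq_chart hv (hvi ▸ isUnit_one)

lemma etaleLocally_exists_eq_chart (m : V ⟶ P1Z.{u}) :
    EtaleLocally fun _ f => ∃ i s, f ≫ m = chart i s :=
  (etaleLocally_hasCoords m).mono fun _ _ ⟨_, hv⟩ =>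
    let ⟨i, hi⟩ := hv.exists_isUnit
    ⟨i, exists_eq_chart hv hi⟩

end Charts

section StandardTriple

open Matrix

variable {T V : Scheme.{u}}

/-- Homogeneous coordinates of the three points `[1 : 0]`, `[0 : 1]` and `[1 : 1]`. -/
def stdCoords {B : Type*} [CommRing B] : Fin 3 → Fin 2 → B := ![![1, 0], ![0, 1], ![1, 1]]

/-- The constant points `[1 : 0]`, `[0 : 1]` and `[1 : 1]` of the projective line. -/
noncomputable def stdPoint (V : Scheme.{u}) : Fin 3 → (V ⟶ P1Z.{u}) :=
  ![chart 0 0, chart 1 0, chart 0 1]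

lemma hasCoords_stdPoint (V : Scheme.{u}) (i : Fin 3) : HasCoords (stdPoint V i) (stdCoords i) := by
  fin_cases i
  · exact (chartCoords_zero 0).subst (motive := HasCoords _) (hasCoords_chart 0 0)
  · exact (chartCoords_one 0).subst (motive := HasCoords _) (hasCoords_chart 1 0)
  · exact (chartCoords_zero 1).subst (motive := HasCoords _) (hasCoords_chart 0 1)

lemma comp_stdPoint (f : V ⟶ T) (i : Fin 3) : f ≫ stdPoint T i = stdPoint V i := by
  fin_cases i <;> simp [stdPoint, comp_chart]

/-- Cramer's rule: the matrix whose columns are the multiples of `a` and `b` that add up to a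
multiple of `c`. -/
def tripleMatrix {B : Type*} [CommRing B] (a b c : Fin 2 → B) : Matrix (Fin 2) (Fin 2) B :=
  !![rowDet c b * a 0, rowDet a c * b 0; rowDet c b * a 1, rowDet a c * b 1]

lemma det_tripleMatrix {B : Type*} [CommRing B] (a b c : Fin 2 → B) :
    (tripleMatrix a b c).det = rowDet c b * rowDet a c * rowDet a b := by
  rw [tripleMatrix, det_fin_two_of, rowDet, rowDet, rowDet]
  ring

lemma tripleMatrix_mulVec_stdCoords {B : Type*} [CommRing B] (w : Fin 3 → Fin 2 → B) (i : Fin 3) :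
    tripleMatrix (w 0) (w 1) (w 2) *ᵥ stdCoords i =
      ![rowDet (w 2) (w 1), rowDet (w 0) (w 2), rowDet (w 0) (w 1)] i • w i := by
  ext k
  fin_cases i <;> fin_cases k <;>
    simp [tripleMatrix, stdCoords, rowDet, mulVec, dotProduct] <;> ring

lemma exists_pointAut_stdPoint {σ : Fin 3 → (T ⟶ P1Z.{u})} {w : Fin 3 → Fin 2 → Γ(T, ⊤)}
    (hσ : ∀ i, HasCoords (σ i) (w i)) (h : Pairwise fun i j => NowhereEq (σ i) (σ j)) :
    ∃ γ : PointAut P1Z.{u} T, ∀ i, γ.perm (𝟙 T) (stdPoint T i) = σ i := by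
  have hdet {i j : Fin 3} (hij : i ≠ j) : IsUnit (rowDet (w i) (w j)) :=
    (hσ i).isUnit_rowDet (hσ j) (h hij)
  obtain ⟨γ, hγ⟩ := PointAut.exists_isHomographic <| GeneralLinearGroup.mk''
    (tripleMatrix (w 0) (w 1) (w 2)) <| det_tripleMatrix (w 0) (w 1) (w 2) ▸
      ((hdet (by decide)).mul (hdet (by decide))).mul (hdet (by decide))
  have hunit : ∀ i, IsUnit (![rowDet (w 2) (w 1), rowDet (w 0) (w 2), rowDet (w 0) (w 1)] i) := by
    intro i
    fin_cases i <;> exact hdet (by decide)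
  refine ⟨γ, fun i => hγ _ _ _ ⟨_, hasCoords_stdPoint T i, ?_⟩⟩
  convert (hσ i).smul (hunit i).unit using 1
  exact (tripleMatrix_mulVec_stdCoords w i)

lemma etaleLocally_exists_pointAut_stdPoint (σ : Fin 3 → (T ⟶ P1Z.{u}))
    (h : Pairwise fun i j => NowhereEq (σ i) (σ j)) :
    EtaleLocally fun U f => ∃ γ : PointAut P1Z.{u} U,
      ∀ i, γ.perm (𝟙 U) (stdPoint U i) = f ≫ σ i := by
  refine .of_opens fun x => ?_
  choose U hU w hw using fun i => exists_opens_hasCoords (σ i) x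
  refine ⟨⨅ i, U i, ?_, exists_pointAut_stdPoint
    (w := fun i => res (T.homOfLE (iInf_le U i)) ∘ w i) (fun i => ?_) fun i j hij => (h hij).comp _⟩
  · rw [← SetLike.mem_coe, TopologicalSpace.Opens.coe_iInf]
    exact Set.mem_iInter.mpr hU
  · have := (hw i).comp (T.homOfLE (iInf_le U i))
    rwa [← Category.assoc, Scheme.homOfLE_ι] at this

end StandardTriple

section RelativeSpec

variable {T : Scheme.{u}} [IsAffine T] {B : Type u} [CommRing B]

lemma exists_relativeSpec (φ : Γ(T, ⊤) →+* B) :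
    ∃ (V : Scheme.{u}) (t : V ⟶ T) (e : B ≃+* Γ(V, ⊤)), e.toRingHom.comp φ = res t ∧
      ∀ ⦃W : Scheme.{u}⦄ (t' : W ⟶ T) (ψ : B →+* Γ(W, ⊤)), ψ.comp φ = res t' →
        ∃ h : W ⟶ V, h ≫ t = t' ∧ (res h).comp e.toRingHom = ψ := by
  let e := Scheme.ΓSpecIso (CommRingCat.of B)
  let t := Spec.map (CommRingCat.ofHom φ) ≫ T.isoSpec.inv
  have hT : T.isoSpec.inv.appTop = (Scheme.ΓSpecIso Γ(T, ⊤)).inv := by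
    rw [← Iso.hom_comp_eq_id, ← Scheme.toSpecΓ_appTop, ← Scheme.Hom.comp_appTop,
      T.isoSpec_inv_toSpecΓ, Scheme.Hom.id_appTop]
  have ht : CommRingCat.ofHom φ ≫ e.inv = t.appTop := by
    rw [Scheme.ΓSpecIso_inv_naturality, Scheme.Hom.comp_appTop, hT]
    rfl
  refine ⟨_, t, e.symm.commRingCatIsoToRingEquiv, congrArg CommRingCat.Hom.hom ht, ?_⟩
  intro W t' ψ h
  have hψ : e.inv ≫ (W.toSpecΓ ≫ Spec.map (CommRingCat.ofHom ψ)).appTop = CommRingCat.ofHom ψ := by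
    rw [Scheme.Hom.comp_appTop, ← Scheme.ΓSpecIso_inv_naturality_assoc, Scheme.toSpecΓ_appTop,
      Iso.inv_hom_id, Category.comp_id]
  refine ⟨_, ext_of_isAffine ?_, congrArg CommRingCat.Hom.hom hψ⟩
  rw [Scheme.Hom.comp_appTop, ← ht, Category.assoc, hψ]
  exact CommRingCat.hom_ext h

end RelativeSpec

section Polynomials

open Polynomial LaurentPolynomial

variable {R : Type*} [CommRing R]

lemma eval₂_C_T_one (p : R[X]) : p.eval₂ LaurentPolynomial.C (T 1) = toLaurent p := by
  refine DFunLike.congr_fun (f := eval₂RingHom LaurentPolynomial.C (T 1)) (g := toLaurent) ?_ p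
  ext <;> simp

lemma eval₂_C_T_neg_one (p : R[X]) :
    p.eval₂ LaurentPolynomial.C (T (-1)) = invert (toLaurent p) := by
  refine DFunLike.congr_fun (f := eval₂RingHom LaurentPolynomial.C (T (-1)))
    (g := (invert (R := R)).toRingEquiv.toRingHom.comp toLaurent) ?_ p
  ext <;> simp

lemma eq_C_of_toLaurent_eq_invert {p q : R[X]} (h : toLaurent p = invert (toLaurent q)) :
    p = Polynomial.C (p.coeff 0) := by
  nontriviality R
  rcases eq_or_ne p 0 with rfl | hp
  · simp only [coeff_zero, map_zero]
  have hrev : p * X ^ q.natDegree = q.reverse := by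
    apply toLaurent_injective
    rw [map_mul, toLaurent_X_pow, toLaurent_reverse, h]
  have hdeg := q.reverse_natDegree_le
  rw [← hrev, natDegree_mul_X_pow _ hp] at hdeg
  exact eq_C_of_natDegree_eq_zero (by omega)

lemma eq_one_of_toLaurent_mul_invert {p q r : R[X]} (hr : p * r = 1) (h1 : p.eval 1 = 1)
    (hq : toLaurent p * invert (toLaurent q) = 1) : p = 1 := by
  have hinv : toLaurent r = invert (toLaurent q) := by
    rw [← mul_one (toLaurent r), ← hq, ← mul_assoc, ← map_mul, mul_comm r, hr, map_one, one_mul]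
  have hC := eq_C_of_toLaurent_eq_invert hinv
  have hc : r.coeff 0 = 1 := by
    have := congrArg (eval 1) hr
    rwa [eval_mul, h1, one_mul, hC, eval_C, eval_one] at this
  rwa [hC, hc, map_one, mul_one] at hr

/-- A self-map of `ℙ¹` which is `x ↦ f x` near `0`, is `y ↦ g y` in the coordinate `y = x⁻¹` near
`∞`, fixes `0`, `∞` and `1`, and has a polynomial left inverse `f'` near `0`, is the identity. -/
lemma eq_X_of_toLaurent_mul_invert {f g f' : R[X]} (f0 : f.coeff 0 = 0) (f1 : f.eval 1 = 1)
    (g0 : g.coeff 0 = 0) (f0' : f'.coeff 0 = 0) (hf : f'.comp f = X)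
    (h : toLaurent f * invert (toLaurent g) = 1) : f = X ∧ g = X := by
  obtain ⟨p, rfl⟩ := X_dvd_iff.mpr f0
  obtain ⟨q, rfl⟩ := X_dvd_iff.mpr g0
  obtain ⟨p', rfl⟩ := X_dvd_iff.mpr f0'
  have hpr : p * p'.comp (X * p) = 1 := by
    rw [mul_comp, X_comp, mul_assoc] at hf
    exact isRegular_X.left (hf.trans (mul_one X).symm)
  have hpq : toLaurent p * invert (toLaurent q) = 1 := by
    rw [map_mul, map_mul, map_mul, toLaurent_X, invert_T, mul_mul_mul_comm, ← T_add,
      add_neg_cancel, T_zero, one_mul] at h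
    exact h
  have hp : p = 1 := eq_one_of_toLaurent_mul_invert hpr (by simpa using f1) hpq
  rw [hp, map_one, one_mul, map_eq_one_iff _ invert.injective,
    map_eq_one_iff _ toLaurent_injective] at hpq
  rw [hp, hpq, mul_one]
  exact ⟨rfl, rfl⟩

end Polynomials

section Rigidity

open Polynomial LaurentPolynomial

namespace PointAut

variable {Z T V : Scheme.{u}} {i j : Fin 2}

lemma perm_comp (β : PointAut Z T) {m n : T ⟶ Z} (h : β.perm (𝟙 T) m = n) (t : V ⟶ T) :
    β.perm t (t ≫ m) = t ≫ n := by
  rw [← h, β.comp_perm, Category.comp_id]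

lemma nowhereEq (β : PointAut Z T) {t : V ⟶ T} {m n : V ⟶ Z} (h : NowhereEq m n) :
    NowhereEq (β.perm t m) (β.perm t n) := fun K _ y => by
  rw [β.comp_perm, β.comp_perm]
  exact (β.perm _).injective.ne (h K y)

/-- The automorphism `α` preserves the chart `D₊(Xᵢ)`, where it is the polynomial map `s ↦ f s`. -/
def IsPolynomialOn (α : PointAut P1Z.{u} T) (i : Fin 2) (f : Γ(T, ⊤)[X]) : Prop :=
  ∀ ⦃V : Scheme.{u}⦄ (t : V ⟶ T) (s : Γ(V, ⊤)),
    α.perm t (chart i s) = chart i (f.eval₂ (res t) s)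

variable {α : PointAut P1Z.{u} T} {f g : Γ(T, ⊤)[X]}

-- The polynomial is the image of the generic point of the chart, `X` over `Γ(T, ⊤)[X]`.
lemma exists_isPolynomialOn [IsAffine T] (hij : i ≠ j)
    (h : α.perm (𝟙 T) (chart j 0) = chart j 0) : ∃ f, α.IsPolynomialOn i f := by
  obtain ⟨V, t, e, -, hV⟩ := exists_relativeSpec (T := T) Polynomial.C
  have hne : NowhereEq (α.perm t (chart i (e X))) (chart j 0) := by
    have := α.perm_comp h t
    rw [comp_chart, map_zero] at this
    exact this ▸ α.nowhereEq (nowhereEq_chart_zero hij _)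
  obtain ⟨s₁, hs₁⟩ := exists_eq_chart_of_nowhereEq hij hne
  obtain ⟨f, rfl⟩ := e.surjective s₁
  refine ⟨f, fun W t' s => ?_⟩
  obtain ⟨h, rfl, hψ⟩ := hV t' (eval₂RingHom (res t') s) (RingHom.ext fun r => eval₂_C _ _)
  have hX : res h (e X) = s := (DFunLike.congr_fun hψ X).trans (eval₂_X _ _)
  have hf : res h (e f) = f.eval₂ (res (h ≫ t)) s := DFunLike.congr_fun hψ f
  rw [← hf, ← comp_chart, ← hs₁, α.comp_perm, comp_chart, hX]

namespace IsPolynomialOn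

lemma eval_eq (hf : α.IsPolynomialOn i f) {s s' : Γ(T, ⊤)}
    (h : α.perm (𝟙 T) (chart i s) = chart i s') : f.eval s = s' := by
  rw [hf] at h
  exact (chart_injective i h : _)

lemma comp_eq_X [IsAffine T] (hf : α.IsPolynomialOn i f) (hg : α.symm.IsPolynomialOn i g) :
    g.comp f = X := by
  obtain ⟨V, t, e, he, -⟩ := exists_relativeSpec (T := T) Polynomial.C
  have hchart : chart i (g.eval₂ (res t) (f.eval₂ (res t) (e X))) = chart i (e X) := by
    rw [← hg, ← hf]
    exact (α.perm t).symm_apply_apply _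
  have h := chart_injective i hchart
  rw [← eval₂_comp, ← he] at h
  have heval := hom_eval₂ (g.comp f) Polynomial.C e.toRingHom X
  rw [eval₂_C_X] at heval
  exact e.injective (heval.trans h)

lemma toLaurent_mul_invert [IsAffine T] (hf : α.IsPolynomialOn 0 f) (hg : α.IsPolynomialOn 1 g) :
    toLaurent f * invert (toLaurent g) = 1 := by
  obtain ⟨V, t, e, he, -⟩ := exists_relativeSpec (T := T) LaurentPolynomial.C
  have hT : e (LaurentPolynomial.T 1) * e (LaurentPolynomial.T (-1)) = 1 := by
    rw [← map_mul, ← T_add, add_neg_cancel, T_zero, map_one]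
  have hchart := congrArg (α.perm t) ((chart_eq_chart_iff zero_ne_one).mpr hT)
  rw [hf, hg, chart_eq_chart_iff zero_ne_one] at hchart
  have hf' := hom_eval₂ f LaurentPolynomial.C e.toRingHom (LaurentPolynomial.T 1)
  have hg' := hom_eval₂ g LaurentPolynomial.C e.toRingHom (LaurentPolynomial.T (-1))
  rw [eval₂_C_T_one, he] at hf'
  rw [eval₂_C_T_neg_one, he] at hg'
  apply e.injective
  rw [map_mul, map_one]
  exact (congrArg₂ _ hf' hg').trans hchart

end IsPolynomialOn

lemma perm_eq_of_isAffine [IsAffine T] (h : ∀ i, α.perm (𝟙 T) (stdPoint T i) = stdPoint T i)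
    (t : V ⟶ T) (m : V ⟶ P1Z.{u}) : α.perm t m = m := by
  have h' (i : Fin 3) : α.symm.perm (𝟙 T) (stdPoint T i) = stdPoint T i :=
    (Equiv.symm_apply_eq _).mpr (h i).symm
  obtain ⟨f, hf⟩ := exists_isPolynomialOn zero_ne_one (h 1)
  obtain ⟨g, hg⟩ := exists_isPolynomialOn one_ne_zero (h 0)
  obtain ⟨f', hf'⟩ := exists_isPolynomialOn zero_ne_one (h' 1)
  obtain ⟨rfl, rfl⟩ : f = X ∧ g = X := by
    refine eq_X_of_toLaurent_mul_invert (f' := f') ?_ (hf.eval_eq (h 2)) ?_ ?_ (hf.comp_eq_X hf')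
      (hf.toLaurent_mul_invert hg)
    · rw [coeff_zero_eq_eval_zero, hf.eval_eq (h 0)]
    · rw [coeff_zero_eq_eval_zero, hg.eval_eq (h 1)]
    · rw [coeff_zero_eq_eval_zero, hf'.eval_eq (h' 0)]
  refine ((etaleLocally_exists_eq_chart m).mono fun U k => ?_).hom_ext
  rintro ⟨i, s, hs⟩
  rw [α.comp_perm, hs]
  obtain rfl | rfl : i = 0 ∨ i = 1 := by omega
  · rw [hf, eval₂_X]
  · rw [hg, eval₂_X]

theorem perm_eq (h : ∀ i, α.perm (𝟙 T) (stdPoint T i) = stdPoint T i)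
    (t : V ⟶ T) (m : V ⟶ P1Z.{u}) : α.perm t m = m := by
  refine EtaleLocally.hom_ext (.of_opens fun x => ?_)
  obtain ⟨U, hU, hx, -⟩ := exists_isAffineOpen_mem_and_subset (x := t x) (U := ⊤) trivial
  have : IsAffine U := hU
  refine ⟨t ⁻¹ᵁ U, hx, ?_⟩
  rw [α.comp_perm, ← morphismRestrict_ι]
  refine perm_eq_of_isAffine (α := α.baseChange U.ι) (fun i => ?_) (t ∣_ U) _
  have := α.perm_comp (h i) U.ι
  rw [comp_stdPoint] at this
  exact (congrArg (α.perm · _) (Category.id_comp U.ι)).trans this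

end PointAut

end Rigidity

section EtaleCovers

variable {D S T W X : Scheme.{u}} {p : D ⟶ S} {g : T ⟶ S} {n k : ℕ}

lemma range_comp_subset (f : W ⟶ X) (h : X ⟶ S) : Set.range (f ≫ h) ⊆ Set.range h := by
  rintro _ ⟨z, rfl⟩
  exact ⟨_, (Scheme.Hom.comp_apply _ _ _).symm⟩

lemma NowhereEq.symm {σ τ : T ⟶ D} (h : NowhereEq σ τ) : NowhereEq τ σ :=
  fun K _ y => (h K y).symm

section EqualityLocus

variable [LocallyOfFiniteType p] [FormallyUnramified p] [IsSeparated p] {a b : X ⟶ D}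

lemma exists_equalizer_opens (h : a ≫ p = b ≫ p) : ∃ U : X.Opens, IsClosed (U : Set X) ∧
    ∀ ⦃Y : Scheme.{u}⦄ (y : Y ⟶ X), Set.range y ⊆ U ↔ y ≫ a = y ≫ b := by
  let l : X ⟶ pullback p p := pullback.lift a b h
  let e : pullback (pullback.diagonal p) l ⟶ X := pullback.snd _ _
  have he : e ≫ a = e ≫ b := by
    have hc : pullback.fst _ _ ≫ pullback.diagonal p = e ≫ l := pullback.condition
    have h₁ := congrArg (· ≫ pullback.fst p p) hc
    have h₂ := congrArg (· ≫ pullback.snd p p) hc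
    simp only [Category.assoc, l, pullback.lift_fst, pullback.lift_snd, pullback.diagonal_fst,
      pullback.diagonal_snd, Category.comp_id] at h₁ h₂
    exact h₁.symm.trans h₂
  refine ⟨e.opensRange, e.isClosedEmbedding.isClosed_range, fun Y y => ⟨fun hy => ?_, fun hy => ?_⟩⟩
  · rw [← IsOpenImmersion.lift_fac e y hy, Category.assoc, he, Category.assoc]
  · have hdiag : (y ≫ a) ≫ pullback.diagonal p = y ≫ l := by
      apply pullback.hom_ext <;>
        simp only [Category.assoc, l, pullback.lift_fst, pullback.lift_snd, pullback.diagonal_fst,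
          pullback.diagonal_snd, Category.comp_id, hy]
    rw [← pullback.lift_snd _ _ hdiag]
    exact range_comp_subset _ _

lemma exists_opens_forall_ne {t : Fin k → (X ⟶ D)} (h : ∀ i, a ≫ p = t i ≫ p) :
    ∃ V : X.Opens, ∀ (K : Type u) [Field K] (y : Spec (CommRingCat.of K) ⟶ X),
      Set.range y ⊆ V ↔ ∀ i, y ≫ a ≠ y ≫ t i := by
  choose U hUc hU using fun i => exists_equalizer_opens (h i)
  refine ⟨⨅ i, ⟨(U i : Set X)ᶜ, (hUc i).isOpen_compl⟩, fun K _ y => ?_⟩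
  have : Unique (Spec (CommRingCat.of K)) := inferInstanceAs (Unique (PrimeSpectrum K))
  rw [TopologicalSpace.Opens.coe_iInf, Set.subset_iInter_iff]
  refine forall_congr' fun i => ?_
  rw [ne_eq, ← hU i y, Set.range_unique, Set.singleton_subset_iff, Set.singleton_subset_iff]
  rfl

end EqualityLocus

section GeometricPoints

variable (K : Type u) [Field K]

lemma nonempty_lift_equiv_pullback [IsFinite p] [IsAlgClosed K]
    (y : Spec (CommRingCat.of K) ⟶ S) : Finite (pullback p y : Scheme.{u}) ∧
      Nonempty ({q : Spec (CommRingCat.of K) ⟶ D // q ≫ p = y} ≃ (pullback p y : Scheme.{u})) := by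
  have : IsLocallyArtinian (Spec (CommRingCat.of K)) :=
    Scheme.isLocallyArtinianScheme_Spec.mpr (inferInstanceAs (IsArtinianRing K))
  have : IsLocallyArtinian (pullback p y) := .of_locallyQuasiFinite (pullback.snd p y)
  have : CompactSpace (pullback p y : Scheme.{u}) :=
    QuasiCompact.compactSpace_of_compactSpace (pullback.snd p y)
  have hclosed : closedPoints (pullback p y : Scheme.{u}) = Set.univ :=
    Set.eq_univ_of_forall fun z => isClosed_discrete _
  let e : {q : Spec (CommRingCat.of K) ⟶ D // q ≫ p = y} ≃
      {r : Spec (CommRingCat.of K) ⟶ pullback p y // r ≫ pullback.snd p y = 𝟙 _} :=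
    { toFun q := ⟨pullback.lift q.1 (𝟙 _) (q.2.trans (Category.id_comp _).symm),
        pullback.lift_snd _ _ _⟩
      invFun r := ⟨r.1 ≫ pullback.fst p y, by
        rw [Category.assoc, pullback.condition, ← Category.assoc, r.2, Category.id_comp]⟩
      left_inv q := Subtype.ext (pullback.lift_fst _ _ _)
      right_inv r := Subtype.ext (pullback.hom_ext (pullback.lift_fst _ _ _)
        ((pullback.lift_snd _ _ _).trans r.2.symm)) }
  exact ⟨finite_of_compact_of_discrete, ⟨e.trans <|
    (pointEquivClosedPoint (pullback.snd p y)).trans <|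
      (Equiv.setCongr hclosed).trans (Equiv.Set.univ _)⟩⟩

lemma exists_geometric_point (x : X) : ∃ (K : Type u) (_ : Field K) (_ : IsAlgClosed K)
    (y : Spec (CommRingCat.of K) ⟶ X), Set.range y = {x} := by
  let K : Type u := AlgebraicClosure (X.residueField x)
  let φ : X.residueField x ⟶ CommRingCat.of K := CommRingCat.ofHom (algebraMap (X.residueField x) K)
  have : Nonempty (Spec (CommRingCat.of K)) := inferInstanceAs (Nonempty (PrimeSpectrum K))
  refine ⟨K, inferInstance, inferInstance, Spec.map φ ≫ X.fromSpecResidueField x,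
    (Set.range_nonempty _).subset_singleton_iff.mp ?_⟩
  rw [← X.range_fromSpecResidueField x]
  exact range_comp_subset _ _

end GeometricPoints

/-- The morphisms `tᵢ` are liftings of `g` along `p` with disjoint images. -/
structure DisjointLifts {ι : Type*} (p : D ⟶ S) (g : T ⟶ S) (t : ι → (T ⟶ D)) : Prop where
  comp_eq : ∀ i, t i ≫ p = g
  nowhereEq : Pairwise fun i j => NowhereEq (t i) (t j)

namespace DisjointLifts

lemma comp {ι : Type*} {t : ι → (T ⟶ D)} (h : DisjointLifts p g t) (f : W ⟶ T) :
    DisjointLifts p (f ≫ g) fun i => f ≫ t i :=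
  ⟨fun i => by rw [Category.assoc, h.comp_eq], fun _ _ hij => (h.nowhereEq hij).comp f⟩

lemma cons {t : Fin k → (T ⟶ D)} (h : DisjointLifts p g t) {s : T ⟶ D} (hs : s ≫ p = g)
    (hne : ∀ i, NowhereEq s (t i)) : DisjointLifts p g (Fin.cons s t) := by
  refine ⟨Fin.cases hs h.comp_eq, fun i j hij => ?_⟩
  cases i using Fin.cases <;> cases j using Fin.cases
  · exact absurd rfl hij
  · exact hne _
  · exact (hne _).symm
  · exact h.nowhereEq (ne_of_apply_ne Fin.succ hij)

variable {t : Fin k → (T ⟶ D)} {K : Type u} [Field K]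

/-- The liftings of the point `y ≫ g` of `S` that the `tᵢ` induce. -/
noncomputable def fiberMap (h : DisjointLifts p g t) (y : Spec (CommRingCat.of K) ⟶ T) (i : Fin k) :
    {q : Spec (CommRingCat.of K) ⟶ D // q ≫ p = y ≫ g} :=
  ⟨y ≫ t i, by rw [Category.assoc, h.comp_eq]⟩

lemma fiberMap_injective (h : DisjointLifts p g t) (y : Spec (CommRingCat.of K) ⟶ T) :
    Function.Injective (h.fiberMap y) := fun _ _ hij =>
  by_contra fun hne => h.nowhereEq hne K y (congrArg Subtype.val hij)

end DisjointLifts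

variable {t : Fin k → (T ⟶ D)}

lemma finite_and_card_lift (hp : IsEtaleCoverOfDegree n p) {K : Type u} [Field K]
    [IsAlgClosed K] (y : Spec (CommRingCat.of K) ⟶ S) :
    Finite {q : Spec (CommRingCat.of K) ⟶ D // q ≫ p = y} ∧
      Nat.card {q : Spec (CommRingCat.of K) ⟶ D // q ≫ p = y} = n := by
  have : IsFinite p := hp.1
  obtain ⟨_, ⟨e⟩⟩ := nonempty_lift_equiv_pullback (p := p) K y
  exact ⟨.of_equiv _ e.symm, (Nat.card_congr e).trans (hp.2.2.2 K y)⟩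

namespace DisjointLifts

lemma fiberMap_surjective {t : Fin n → (T ⟶ D)} (h : DisjointLifts p g t)
    (hp : IsEtaleCoverOfDegree n p) {K : Type u} [Field K] [IsAlgClosed K]
    (y : Spec (CommRingCat.of K) ⟶ T) : Function.Surjective (h.fiberMap y) := by
  obtain ⟨_, hcard⟩ := finite_and_card_lift hp (y ≫ g)
  refine ((h.fiberMap_injective y).bijective_of_nat_card_le ?_).2
  rw [hcard, Nat.card_fin]

lemma etaleLocally_exists_eq {t : Fin n → (T ⟶ D)} (h : DisjointLifts p g t)
    (hp : IsEtaleCoverOfDegree n p) {a : W ⟶ D} {b : W ⟶ T} (hab : a ≫ p = b ≫ g) :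
    EtaleLocally fun _ f => ∃ i, f ≫ a = f ≫ b ≫ t i := by
  have : IsFinite p := hp.1
  have : Etale p := hp.2.1
  refine .of_opens fun w => ?_
  obtain ⟨K, _, _, y, hy⟩ := exists_geometric_point w
  obtain ⟨i, hi⟩ := h.fiberMap_surjective hp (y ≫ b)
    ⟨y ≫ a, by rw [Category.assoc, hab, Category.assoc]⟩
  obtain ⟨U, -, hU⟩ := exists_equalizer_opens (p := p) (a := a) (b := b ≫ t i)
    (by rw [Category.assoc, h.comp_eq, hab])
  refine ⟨U, Set.singleton_subset_iff.mp (hy ▸ (hU y).mpr ?_), i,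
    (hU U.ι).mp (Scheme.Opens.range_ι U).le⟩
  rw [← Category.assoc]
  exact (congrArg Subtype.val hi).symm

lemma exists_forall_ne (h : DisjointLifts p g t) (hp : IsEtaleCoverOfDegree n p) (hk : k < n)
    {K : Type u} [Field K] [IsAlgClosed K] (y : Spec (CommRingCat.of K) ⟶ T) :
    ∃ q : Spec (CommRingCat.of K) ⟶ D, q ≫ p = y ≫ g ∧ ∀ i, q ≠ y ≫ t i := by
  by_contra! hq
  have hsurj : Function.Surjective (h.fiberMap y) := fun q =>
    (hq q q.2).imp fun i hi => Subtype.ext hi.symm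
  have := Nat.card_le_card_of_surjective _ hsurj
  rw [(finite_and_card_lift hp _).2, Nat.card_fin] at this
  exact hk.not_ge this

lemma etaleLocally_exists_cons (h : DisjointLifts p g t) (hp : IsEtaleCoverOfDegree n p)
    (hk : k < n) : EtaleLocally fun U f => ∃ t' : Fin (k + 1) → (U ⟶ D),
      DisjointLifts p (f ≫ g) t' := by
  have : IsFinite p := hp.1
  have : Etale p := hp.2.1
  obtain ⟨V, hV⟩ := exists_opens_forall_ne (p := p) (a := pullback.snd g p)
    (t := fun i => pullback.fst g p ≫ t i)
    (fun i => by rw [Category.assoc, h.comp_eq, pullback.condition])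
  have hne (i : Fin k) :
      NowhereEq (V.ι ≫ pullback.snd g p) ((V.ι ≫ pullback.fst g p) ≫ t i) := fun K _ y => by
    have := (hV K (y ≫ V.ι)).mp fun _ ⟨z, hz⟩ => hz ▸ (y z).2
    simpa only [Category.assoc] using this i
  intro x
  obtain ⟨K, _, _, y, hy⟩ := exists_geometric_point x
  obtain ⟨q, hq, hqt⟩ := h.exists_forall_ne hp hk y
  have hl : Set.range (pullback.lift y q hq.symm) ⊆ V := (hV K _).mpr fun i => by
    rw [← Category.assoc, pullback.lift_snd, pullback.lift_fst]
    exact hqt i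
  have hrange : Set.range y ⊆ Set.range (V.ι ≫ pullback.fst g p) := by
    rw [← pullback.lift_fst y q hq.symm, ← IsOpenImmersion.lift_fac V.ι _
      (hl.trans (Scheme.Opens.range_ι V).ge), Category.assoc]
    exact range_comp_subset _ _
  refine ⟨V, V.ι ≫ pullback.fst g p, inferInstance, hrange (hy.ge rfl), _,
    (h.comp (V.ι ≫ pullback.fst g p)).cons (s := V.ι ≫ pullback.snd g p) ?_ hne⟩
  rw [Category.assoc, Category.assoc, pullback.condition]

end DisjointLifts

lemma IsEtaleCoverOfDegree.etaleLocally_exists_disjointLifts (hp : IsEtaleCoverOfDegree n p)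
    (g : T ⟶ S) {k : ℕ} (hk : k ≤ n) :
    EtaleLocally fun U f => ∃ t : Fin k → (U ⟶ D), DisjointLifts p (f ≫ g) t := by
  induction k with
  | zero => exact .of_id ⟨Fin.elim0, fun i => i.elim0, fun i => i.elim0⟩
  | succ k ih =>
    refine (ih (Nat.le_of_succ_le hk)).bind fun U f ⟨t, ht⟩ => ?_
    simpa only [Category.assoc] using ht.etaleLocally_exists_cons hp hk

end EtaleCovers

section Transitivity

variable {Z T V : Scheme.{u}}

lemma PointAut.baseChange_perm_id (β : PointAut Z T) {m n : T ⟶ Z} (h : β.perm (𝟙 T) m = n)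
    (f : V ⟶ T) : (β.baseChange f).perm (𝟙 V) (f ≫ m) = f ≫ n := by
  refine .trans ?_ (β.perm_comp h f)
  exact congrArg (β.perm · _) (Category.id_comp f)

variable {σ τ : Fin 3 → (T ⟶ P1Z.{u})}

lemma etaleLocally_exists_pointAut (hσ : Pairwise fun i j => NowhereEq (σ i) (σ j))
    (hτ : Pairwise fun i j => NowhereEq (τ i) (τ j)) :
    EtaleLocally fun U f => ∃ β : PointAut P1Z.{u} U, ∀ i, β.perm (𝟙 U) (f ≫ σ i) = f ≫ τ i := by
  refine (etaleLocally_exists_pointAut_stdPoint σ hσ).bind fun U f ⟨γ, hγ⟩ => ?_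
  refine (etaleLocally_exists_pointAut_stdPoint (fun i => f ≫ τ i)
    fun i j hij => (hτ hij).comp f).mono fun U' k ⟨δ, hδ⟩ =>
    ⟨(γ.baseChange k).symm.trans δ, fun i => ?_⟩
  rw [Category.assoc, Category.assoc, ← hδ, ← comp_stdPoint k]
  exact congrArg (δ.perm _) ((Equiv.symm_apply_eq _).mpr (γ.baseChange_perm_id (hγ i) k).symm)

lemma PointAut.perm_eq_perm_of_stdPoint {α β : PointAut P1Z.{u} T}
    (h : ∀ i, α.perm (𝟙 T) (stdPoint T i) = β.perm (𝟙 T) (stdPoint T i))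
    (t : V ⟶ T) (m : V ⟶ P1Z.{u}) : α.perm t m = β.perm t m :=
  (Equiv.symm_apply_eq _).mp <|
    perm_eq (α := α.trans β.symm) (fun i => (Equiv.symm_apply_eq _).mpr (h i)) t m

theorem PointAut.perm_eq_perm (hσ : Pairwise fun i j => NowhereEq (σ i) (σ j))
    {α β : PointAut P1Z.{u} T} (h : ∀ i, α.perm (𝟙 T) (σ i) = β.perm (𝟙 T) (σ i))
    (t : V ⟶ T) (m : V ⟶ P1Z.{u}) : α.perm t m = β.perm t m := by
  refine (((etaleLocally_exists_pointAut_stdPoint σ hσ).pullback t).mono fun W a => ?_).hom_ext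
  rintro ⟨U, b, f, hab, γ, hγ⟩
  have hγσ (δ : PointAut P1Z.{u} T) (i : Fin 3) :
      (γ.trans (δ.baseChange f)).perm (𝟙 U) (stdPoint U i) = f ≫ δ.perm (𝟙 T) (σ i) :=
    (congrArg _ (hγ i)).trans (δ.baseChange_perm_id rfl f)
  have key := perm_eq_perm_of_stdPoint (α := γ.trans (α.baseChange f))
    (β := γ.trans (β.baseChange f)) (fun i => by rw [hγσ, hγσ, h]) b ((γ.perm b).symm (a ≫ m))
  have hγb (δ : PointAut P1Z.{u} T) :
      (γ.trans (δ.baseChange f)).perm b ((γ.perm b).symm (a ≫ m)) = a ≫ δ.perm t m :=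
    (congrArg _ ((γ.perm b).apply_symm_apply _)).trans <| by
      rw [δ.comp_perm, hab]
      rfl
  rw [← hγb α, ← hγb β, key]

end Transitivity

section Descent

variable {D S T V W : Scheme.{u}} {p : D ⟶ S} {e e' : D ⟶ P1Z.{u}} {g : T ⟶ S}

lemma DisjointLifts.pairwise_nowhereEq [JointlyMono₂ p e] {ι : Type*} {t : ι → (T ⟶ D)}
    (h : DisjointLifts p g t) : Pairwise fun i j => NowhereEq (t i ≫ e) (t j ≫ e) :=
  fun i j hij K _ y hy => h.nowhereEq hij K y <|
    JointlyMono₂.right_cancellation (p₁ := p) (p₂ := e) _ _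
      (by rw [Category.assoc, h.comp_eq, Category.assoc, h.comp_eq])
      (by rw [Category.assoc, hy, Category.assoc])

namespace PointAut

/-- Over `g : T ⟶ S`, the automorphism `α` of `ℙ¹_T` carries the point `e` of `ℙ¹` parametrized by
`p : D ⟶ S` to the point `e'`. -/
def Carries (p : D ⟶ S) (e e' : D ⟶ P1Z.{u}) (g : T ⟶ S) (α : PointAut P1Z.{u} T) : Prop :=
  ∀ ⦃W : Scheme.{u}⦄ (a : W ⟶ D) (b : W ⟶ T), a ≫ p = b ≫ g → α.perm b (a ≫ e) = a ≫ e'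

namespace Carries

variable {α β : PointAut P1Z.{u} T}

lemma baseChange (h : Carries p e e' g α) (f : V ⟶ T) :
    Carries p e e' (f ≫ g) (α.baseChange f) := fun _ a b hab =>
  h a (b ≫ f) (hab.trans (Category.assoc _ _ _).symm)

lemma perm_eq [JointlyMono₂ p e] (hp : IsEtaleCoverOfDegree 3 p) (hα : Carries p e e' g α)
    (hβ : Carries p e e' g β) (t : V ⟶ T) (m : V ⟶ P1Z.{u}) : α.perm t m = β.perm t m := by
  refine ((IsEtaleCoverOfDegree.etaleLocally_exists_disjointLifts hp (t ≫ g) le_rfl).mono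
    fun U f ⟨s, hs⟩ => ?_).hom_ext
  have hs_comp (i : Fin 3) : s i ≫ p = (𝟙 U ≫ f ≫ t) ≫ g := by
    rw [hs.comp_eq, Category.id_comp, Category.assoc]
  rw [α.comp_perm, β.comp_perm]
  have := perm_eq_perm (α := α.baseChange (f ≫ t)) (β := β.baseChange (f ≫ t))
    (hs.pairwise_nowhereEq (e := e))
    (fun i => (hα _ _ (hs_comp i)).trans (hβ _ _ (hs_comp i)).symm) (𝟙 U) (f ≫ m)
  simpa only [PointAut.baseChange, Category.id_comp] using this

end Carries

lemma etaleLocally_exists_carries [JointlyMono₂ p e] [JointlyMono₂ p e']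
    (hp : IsEtaleCoverOfDegree 3 p) (g : T ⟶ S) :
    EtaleLocally fun U f => ∃ β : PointAut P1Z.{u} U, Carries p e e' (f ≫ g) β := by
  refine (IsEtaleCoverOfDegree.etaleLocally_exists_disjointLifts hp g le_rfl).bind
    fun U f ⟨t, ht⟩ => ?_
  refine (etaleLocally_exists_pointAut (ht.pairwise_nowhereEq (e := e))
    (ht.pairwise_nowhereEq (e := e'))).mono fun U' k ⟨β, hβ⟩ => ⟨β, fun W a b hab => ?_⟩
  rw [Category.assoc] at hab
  refine (((ht.comp k).etaleLocally_exists_eq hp hab).mono fun W' l ⟨i, hi⟩ => ?_).hom_ext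
  rw [β.comp_perm, ← Category.assoc, ← Category.assoc, hi]
  have := β.perm_comp (hβ i) (l ≫ b)
  simpa only [Category.assoc] using this

theorem exists_carries [JointlyMono₂ p e] [JointlyMono₂ p e'] (hp : IsEtaleCoverOfDegree 3 p) :
    ∃ α : PointAut P1Z.{u} S, Carries p e e' (𝟙 S) α := by
  let R ⦃V : Scheme.{u}⦄ (t : V ⟶ S) (m n : V ⟶ P1Z.{u}) : Prop :=
    ∃ β : PointAut P1Z.{u} V, Carries p e e' t β ∧ β.perm (𝟙 V) m = n
  have hR {V : Scheme.{u}} (t : V ⟶ S) : EtaleLocally fun U f =>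
      ∃ β : PointAut P1Z.{u} U, Carries p e e' (f ≫ t) β := etaleLocally_exists_carries hp t
  obtain ⟨α, hα⟩ := exists_of_rel (R := R)
    (fun V W f t m n ⟨β, hβ, h⟩ => ⟨β.baseChange f, hβ.baseChange f, β.baseChange_perm_id h f⟩)
    (fun V t m => (hR t).mono fun U f ⟨β, hβ⟩ => ⟨_, β, hβ, rfl⟩)
    (fun V t n => (hR t).mono fun U f ⟨β, hβ⟩ => ⟨_, β, hβ, Equiv.apply_symm_apply _ _⟩)
    (fun V t m n n' ⟨β, hβ, h⟩ ⟨β', hβ', h'⟩ => by rw [← h, ← h', hβ.perm_eq hp hβ'])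
    (fun V t m m' n ⟨β, hβ, h⟩ ⟨β', hβ', h'⟩ => by
      rw [← h', hβ'.perm_eq hp hβ] at h
      exact (β.perm _).injective h)
  refine ⟨α, fun W a b hab => ?_⟩
  rw [Category.comp_id] at hab
  refine ((hR b).mono fun U f ⟨β, hβ⟩ => ?_).hom_ext
  rw [α.comp_perm]
  refine hα _ _ _ ⟨β, hβ, ?_⟩
  rw [← Category.assoc, ← Category.assoc]
  exact hβ _ _ (by rw [Category.assoc, hab, Category.id_comp])

end PointAut

end Descent

section ProjectiveLine

variable {D S V : Scheme.{u}}

/-- The projection `ℙ¹_S ⟶ ℙ¹_ℤ`. -/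
noncomputable def snd (S : Scheme.{u}) : P1 S ⟶ P1Z.{u} :=
  pullback.snd (terminal.from S) (terminal.from P1Z)

/-- The `V`-point of `ℙ¹_S` given by a `V`-point of `S` and a `V`-point of `ℙ¹_ℤ`. -/
noncomputable def lift (t : V ⟶ S) (m : V ⟶ P1Z.{u}) : V ⟶ P1 S :=
  pullback.lift t m (Subsingleton.elim _ _)

lemma lift_proj (t : V ⟶ S) (m : V ⟶ P1Z.{u}) : lift t m ≫ P1proj S = t :=
  pullback.lift_fst _ _ _

lemma lift_snd (t : V ⟶ S) (m : V ⟶ P1Z.{u}) : lift t m ≫ snd S = m :=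
  pullback.lift_snd _ _ _

lemma hom_ext {a b : V ⟶ P1 S} (h₁ : a ≫ P1proj S = b ≫ P1proj S)
    (h₂ : a ≫ snd S = b ≫ snd S) : a = b :=
  pullback.hom_ext h₁ h₂

lemma eq_lift {a : V ⟶ P1 S} {t : V ⟶ S} {m : V ⟶ P1Z.{u}} (h₁ : a ≫ P1proj S = t)
    (h₂ : a ≫ snd S = m) : a = lift t m :=
  hom_ext (h₁.trans (lift_proj t m).symm) (h₂.trans (lift_snd t m).symm)

lemma jointlyMono₂_proj_snd (e : D ⟶ P1 S) [Mono e] : JointlyMono₂ (e ≫ P1proj S) (e ≫ snd S) :=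
  ⟨fun _ _ _ h₁ h₂ => (cancel_mono e).mp (hom_ext (by simpa only [Category.assoc])
    (by simpa only [Category.assoc]))⟩

namespace PointAut

/-- The endomorphism of `ℙ¹_S` representing `α`. -/
noncomputable def toHom (α : PointAut P1Z.{u} S) : P1 S ⟶ P1 S :=
  lift (P1proj S) (α.perm (P1proj S) (snd S))

variable (α : PointAut P1Z.{u} S)

lemma toHom_proj : α.toHom ≫ P1proj S = P1proj S := lift_proj _ _

lemma comp_toHom (a : V ⟶ P1 S) :
    a ≫ α.toHom = lift (a ≫ P1proj S) (α.perm (a ≫ P1proj S) (a ≫ snd S)) :=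
  eq_lift (by rw [Category.assoc, toHom_proj])
    (by rw [Category.assoc, toHom, lift_snd, α.comp_perm])

lemma toHom_comp_symm_toHom : α.toHom ≫ α.symm.toHom = 𝟙 _ := by
  rw [comp_toHom, toHom_proj, toHom, lift_snd]
  exact (eq_lift (Category.id_comp _) ((Category.id_comp _).trans
    ((α.perm _).symm_apply_apply _).symm)).symm

lemma isIso_toHom : IsIso α.toHom :=
  ⟨α.symm.toHom, α.toHom_comp_symm_toHom, α.symm.toHom_comp_symm_toHom⟩

lemma lift_lift_comp_snd {A B : P1 S ⟶ P1 S} (hA : A ≫ P1proj S = P1proj S) (hAB : A ≫ B = 𝟙 _)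
    (t : V ⟶ S) (m : V ⟶ P1Z.{u}) : lift t (lift t m ≫ A ≫ snd S) ≫ B ≫ snd S = m := by
  rw [← eq_lift (a := lift t m ≫ A) (by rw [Category.assoc, hA, lift_proj])
    (Category.assoc _ _ _), Category.assoc, ← Category.assoc A, hAB, Category.id_comp, lift_snd]

/-- The action on points of an automorphism of `ℙ¹_S` over `S`. -/
noncomputable def ofHom (A : P1 S ⟶ P1 S) [IsIso A] (hA : A ≫ P1proj S = P1proj S) :
    PointAut P1Z.{u} S where
  perm t :=
    { toFun m := lift t m ≫ A ≫ snd S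
      invFun m := lift t m ≫ inv A ≫ snd S
      left_inv := lift_lift_comp_snd hA (IsIso.hom_inv_id A) t
      right_inv :=
        lift_lift_comp_snd ((IsIso.inv_comp_eq A).mpr hA.symm) (IsIso.inv_hom_id A) t }
  comp_perm f t m := (Category.assoc _ _ _).symm.trans <| congrArg (· ≫ A ≫ snd S) <|
    eq_lift (by rw [Category.assoc, lift_proj]) (by rw [Category.assoc, lift_snd])

lemma ofHom_perm_apply (A : P1 S ⟶ P1 S) [IsIso A] (hA : A ≫ P1proj S = P1proj S)
    (a : V ⟶ P1 S) : (ofHom A hA).perm (a ≫ P1proj S) (a ≫ snd S) = a ≫ A ≫ snd S := by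
  conv_rhs => rw [eq_lift (a := a) rfl rfl]
  rfl

lemma carries_ofHom {A : P1 S ⟶ P1 S} [IsIso A] (hA : A ≫ P1proj S = P1proj S)
    {e e' : D ⟶ P1 S} (h : e ≫ A = e') :
    Carries (e ≫ P1proj S) (e ≫ snd S) (e' ≫ snd S) (𝟙 S) (ofHom A hA) := by
  intro W a b hab
  obtain rfl : (a ≫ e) ≫ P1proj S = b := by rw [Category.assoc, hab, Category.comp_id]
  rw [← h, ← Category.assoc, ofHom_perm_apply, Category.assoc, Category.assoc]

end PointAut

theorem exists_isIso_comp_eq {e e' : D ⟶ P1 S} [Mono e] [Mono e']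
    (hproj : e' ≫ P1proj S = e ≫ P1proj S) (hp : IsEtaleCoverOfDegree 3 (e ≫ P1proj S)) :
    ∃ A : P1 S ⟶ P1 S, IsIso A ∧ A ≫ P1proj S = P1proj S ∧ e ≫ A = e' := by
  have := jointlyMono₂_proj_snd e
  have : JointlyMono₂ (e ≫ P1proj S) (e' ≫ snd S) := hproj ▸ jointlyMono₂_proj_snd e'
  obtain ⟨α, hα⟩ := PointAut.exists_carries (e := e ≫ snd S) (e' := e' ≫ snd S) hp
  refine ⟨α.toHom, α.isIso_toHom, α.toHom_proj, ?_⟩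
  have hαe := hα (𝟙 D) (e ≫ P1proj S) (by rw [Category.id_comp, Category.comp_id])
  rw [Category.id_comp, Category.id_comp] at hαe
  rw [α.comp_toHom, hαe]
  exact (eq_lift hproj rfl).symm

theorem eq_of_comp_eq_comp {e : D ⟶ P1 S} [Mono e] (hp : IsEtaleCoverOfDegree 3 (e ≫ P1proj S))
    {A B : P1 S ⟶ P1 S} [IsIso A] [IsIso B] (hA : A ≫ P1proj S = P1proj S)
    (hB : B ≫ P1proj S = P1proj S) (h : e ≫ A = e ≫ B) : A = B := by
  have := jointlyMono₂_proj_snd e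
  refine hom_ext (hA.trans hB.symm) ?_
  have hperm := (PointAut.carries_ofHom hA h).perm_eq hp (PointAut.carries_ofHom hB rfl)
    (𝟙 _ ≫ P1proj S) (𝟙 _ ≫ snd S)
  rwa [PointAut.ofHom_perm_apply, PointAut.ofHom_perm_apply, Category.id_comp,
    Category.id_comp] at hperm

end ProjectiveLine

end P1

/-- Let `S` be a scheme and `D, D′` closed subschemes of `ℙ¹_S` such that
`D → S` and `D′ → S` are étale covers of degree 3, and let `η : D → D′` be an
`S`-isomorphism. Then there is a unique `S`-automorphism `α` of `ℙ¹_S` whose restriction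
to `D` equals `η`, i.e. `α ∘ ι_D = ι_{D′} ∘ η`. -/
theorem stmt5 (S D D' : Scheme.{u}) (ι : D ⟶ P1 S) (ι' : D' ⟶ P1 S)
    (hι : IsClosedImmersion ι) (hι' : IsClosedImmersion ι')
    (hD : IsEtaleCoverOfDegree 3 (ι ≫ P1proj S))
    (hD' : IsEtaleCoverOfDegree 3 (ι' ≫ P1proj S))
    (η : D ⟶ D') (hη : IsIso η) (hηS : η ≫ ι' ≫ P1proj S = ι ≫ P1proj S) :
    ∃! α : P1 S ⟶ P1 S, IsIso α ∧ α ≫ P1proj S = P1proj S ∧ ι ≫ α = η ≫ ι' := by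
  obtain ⟨α, hα, hαS, hαD⟩ := P1.exists_isIso_comp_eq (e := ι) (e' := η ≫ ι')
    ((Category.assoc η ι' _).trans hηS) hD
  refine ⟨α, ⟨hα, hαS, hαD⟩, fun β ⟨_, hβS, hβD⟩ => ?_⟩
  exact P1.eq_of_comp_eq_comp hD hβS hαS (hβD.trans hαD.symm)
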